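/- arXiv:1404.1056 — 5 statements merged into one kernel-verified Lean document; each statement's English description precedes it below -/
import Mathlib

section
/- For every integer k ≥ 4 and every deterministic online algorithm A for bin packing with cardinality constraint k, there exists an input list L such that A(L) ≥ 2·OPT(L). In particular, the absolute competitive ratio of every such online algorithm is at least 2. -/
/-!
The adversary first sends `k` tiny items of size `1 / (20 k)`, for which `OPT = 1`; an algorithm
using two or more bins on them has already lost. Otherwise all tiny items share one bin, which is
then full by cardinality. Two items of size `2/5` follow; they cannot enter the full bin.

* If they are packed together, two items of size `11/20` follow. Neither fits on top of the two
  items of size `2/5`, and the two do not fit together, so four bins are used.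
* If they are packed separately, one item of size `13/20` follows. It fits with neither of them, so
  again four bins are used.

In both cases two bins suffice offline: pair each `2/5` with an `11/20`, respectively put the two
`2/5` together and the `13/20` apart, and give two tiny items to one bin and `k - 2` to the other.
-/

open scoped Classical
noncomputable section

/-- An input is a list of item sizes, each in (0,1]. -/
def ValidInput (L : List ℝ) : Prop := ∀ x ∈ L, 0 < x ∧ x ≤ 1

/-- A packing assigns a bin index to each item; it is feasible for cardinality
constraint `k` if every bin receives at most `k` items of total size at most 1. -/
def IsFeasible (k : ℕ) (L : List ℝ) (f : Fin L.length → ℕ) : Prop :=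
  ∀ b : ℕ,
    (Finset.univ.filter (fun i => f i = b)).card ≤ k ∧
    ∑ i ∈ Finset.univ.filter (fun i => f i = b), L.get i ≤ 1

/-- The number of bins used by a packing. -/
def binsUsed (L : List ℝ) (f : Fin L.length → ℕ) : ℕ :=
  (Finset.univ.image f).card

/-- The optimal (minimum) number of bins in a feasible packing of `L`. -/
def OPT (k : ℕ) (L : List ℝ) : ℕ :=
  sInf {n | ∃ f : Fin L.length → ℕ, IsFeasible k L f ∧ binsUsed L f = n}

/-- A deterministic online algorithm is a strategy: given the items seen so far
(ending with the item to be packed), it returns the bin index for that item. -/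
def onlinePacking (A : List ℝ → ℕ) (L : List ℝ) : Fin L.length → ℕ :=
  fun i => A (L.take (i.1 + 1))

/-- The strategy `A` is a valid online algorithm for cardinality constraint `k`
if on every valid input the induced packing is feasible. -/
def OnlineValid (k : ℕ) (A : List ℝ → ℕ) : Prop :=
  ∀ L : List ℝ, ValidInput L → IsFeasible k L (onlinePacking A L)

/-- The number of bins used by online algorithm `A` on input `L`. -/
def onlineBins (A : List ℝ → ℕ) (L : List ℝ) : ℕ :=
  binsUsed L (onlinePacking A L)

/-- The state of First Fit: a list of open bins (in order of opening),
each recorded as (number of items, total size). `ffFind` returns the index of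
the first bin that can receive an item of size `x` (it has at most `k-1` items
and the item fits); if none, the index of a new bin. -/
def ffFind (k : ℕ) (x : ℝ) : List (ℕ × ℝ) → ℕ
  | [] => 0
  | b :: bs => if b.1 < k ∧ b.2 + x ≤ 1 then 0 else ffFind k x bs + 1

/-- Update the First Fit state after packing an item of size `x`. -/
def ffUpdate (k : ℕ) (x : ℝ) : List (ℕ × ℝ) → List (ℕ × ℝ)
  | [] => [(1, x)]
  | b :: bs =>
      if b.1 < k ∧ b.2 + x ≤ 1 then (b.1 + 1, b.2 + x) :: bs
      else b :: ffUpdate k x bs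

/-- The final state of First Fit with cardinality constraint `k` on input `L`. -/
def ffState (k : ℕ) (L : List ℝ) : List (ℕ × ℝ) :=
  L.foldl (fun bs x => ffUpdate k x bs) []

/-- The number of bins used by First Fit with cardinality constraint `k` on `L`. -/
def FF (k : ℕ) (L : List ℝ) : ℕ := (ffState k L).length

/-- The bin index into which First Fit packs the `i`-th item of `L`. -/
def ffAssign (k : ℕ) (L : List ℝ) (i : Fin L.length) : ℕ :=
  ffFind k (L.get i) (ffState k (L.take i.1))

theorem ValidInput.append {L R : List ℝ} (hL : ValidInput L) (hR : ValidInput R) :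
    ValidInput (L ++ R) :=
  List.forall_mem_append.2 ⟨hL, hR⟩

theorem ValidInput.replicate {x : ℝ} (n : ℕ) (hx : 0 < x ∧ x ≤ 1) :
    ValidInput (List.replicate n x) :=
  fun _ hy => List.eq_of_mem_replicate hy ▸ hx

/-- The multiset of sizes of the items that the packing `f` of `L` puts into bin `b`. Bins may be
indexed by any type, so that offline packings into `m` bins can be indexed by `Fin m`. -/
def binContents {ι : Type*} [DecidableEq ι] (L : List ℝ) (f : Fin L.length → ι) (b : ι) :
    Multiset ℝ :=
  (Finset.univ.filter (fun i => f i = b)).val.map L.get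

section BinContents

variable {ι : Type*} [DecidableEq ι]

theorem isFeasible_iff_binContents {k : ℕ} {L : List ℝ} {f : Fin L.length → ℕ} :
    IsFeasible k L f ↔
      ∀ b, (binContents L f b).card ≤ k ∧ (binContents L f b).sum ≤ 1 := by
  simp only [binContents, Multiset.card_map]
  rfl

theorem binContents_eq_zero_iff {L : List ℝ} {f : Fin L.length → ι} {b : ι} :
    binContents L f b = 0 ↔ ∀ i, f i ≠ b := by
  simp [binContents]

theorem binContents_cons (x : ℝ) (L : List ℝ) (c : ι) (f : Fin L.length → ι) (b : ι) :
    binContents (x :: L) (Fin.cons c f : Fin (L.length + 1) → ι) b =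
      (if c = b then {x} else 0) + binContents L f b := by
  simp only [binContents, List.length_cons, Fin.univ_succ, Finset.filter_cons, Finset.filter_map]
  by_cases hcb : c = b <;> simp [hcb]

theorem exists_binContents_eq [Fintype ι] {L : List ℝ} {C : ι → Multiset ℝ}
    (hC : ∑ b, C b = L) : ∃ f : Fin L.length → ι, ∀ b, binContents L f b = C b := by
  induction L generalizing C with
  | nil =>
    have hzero : ∀ b, C b = 0 := by simpa using hC
    exact ⟨Fin.elim0, fun b => by rw [hzero, binContents_eq_zero_iff]; exact fun i => i.elim0⟩
  | cons x L ih =>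
    obtain ⟨c, -, hx⟩ : ∃ c ∈ Finset.univ, x ∈ C c := by
      rw [← Multiset.mem_sum, hC]
      simp
    have hsum : ∑ b, Function.update C c ((C c).erase x) b = L := by
      rw [Finset.sum_update_of_mem (Finset.mem_univ c)]
      refine (Multiset.cons_inj_right x).1 ?_
      rw [← Multiset.cons_add, Multiset.cons_erase hx, Finset.sdiff_singleton_eq_erase,
        Finset.add_sum_erase _ _ (Finset.mem_univ c), hC, Multiset.cons_coe]
    obtain ⟨f, hf⟩ := ih hsum
    refine ⟨Fin.cons c f, fun b => ?_⟩
    rw [binContents_cons, hf]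
    by_cases hcb : c = b
    · subst hcb
      simp [hx]
    · simp [hcb, Function.update_of_ne (Ne.symm hcb)]

end BinContents

theorem one_le_OPT {k : ℕ} {L : List ℝ} {f : Fin L.length → ℕ}
    (hf : IsFeasible k L f) (hL : L ≠ []) : 1 ≤ OPT k L := by
  obtain ⟨g, -, hg⟩ : ∃ g, IsFeasible k L g ∧ binsUsed L g = OPT k L :=
    Nat.sInf_mem (show {n | ∃ g, IsFeasible k L g ∧ binsUsed L g = n}.Nonempty from ⟨_, f, hf, rfl⟩)
  rw [← hg, binsUsed, Nat.one_le_iff_ne_zero, Finset.card_ne_zero]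
  have : NeZero L.length := ⟨List.length_eq_zero_iff.not.2 hL⟩
  exact Finset.univ_nonempty.image g

theorem OPT_le_of_sum_eq {k m : ℕ} {L : List ℝ} (C : Fin m → Multiset ℝ)
    (hC : ∀ b, (C b).card ≤ k ∧ (C b).sum ≤ 1) (hL : ∑ b, C b = L) : OPT k L ≤ m := by
  obtain ⟨f, hf⟩ := exists_binContents_eq hL
  have feasible : IsFeasible k L (fun i => (f i : ℕ)) := by
    refine isFeasible_iff_binContents.2 fun b => ?_
    by_cases hb : b < m
    · have : binContents L (fun i => (f i : ℕ)) b = C ⟨b, hb⟩ := by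
        simp [← hf, binContents, Fin.ext_iff]
      exact this ▸ hC ⟨b, hb⟩
    · have : binContents L (fun i => (f i : ℕ)) b = 0 :=
        binContents_eq_zero_iff.2 fun i => by omega
      simp [this]
  calc OPT k L ≤ binsUsed L (fun i => (f i : ℕ)) := Nat.sInf_le ⟨_, feasible, rfl⟩
    _ ≤ (Finset.range m).card :=
      Finset.card_le_card (Finset.image_subset_iff.2 fun i _ => Finset.mem_range.2 (f i).2)
    _ = m := Finset.card_range m

theorem OPT_le_one {k : ℕ} {L : List ℝ} (hcard : L.length ≤ k) (hsum : L.sum ≤ 1) :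
    OPT k L ≤ 1 :=
  OPT_le_of_sum_eq (fun _ : Fin 1 => L) (by simp [hcard, hsum]) (by simp)

theorem OPT_le_two_of_perm {k : ℕ} {L P Q : List ℝ} {ε : ℝ} (hk : 4 ≤ k) (hε : 0 ≤ ε)
    (hL : L.Perm (List.replicate k ε ++ (P ++ Q))) (hP : P.length ≤ 2 ∧ k * ε + P.sum ≤ 1)
    (hQ : Q.length ≤ 2 ∧ k * ε + Q.sum ≤ 1) : OPT k L ≤ 2 := by
  obtain ⟨n, rfl⟩ := Nat.exists_eq_add_of_le' (show 2 ≤ k by omega)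
  have hn : 0 ≤ n * ε := by positivity
  push_cast at hP hQ
  refine OPT_le_of_sum_eq
    ![↑(List.replicate 2 ε ++ P), ↑(List.replicate n ε ++ Q)] ?_ ?_
  · simp only [Fin.forall_fin_two, Matrix.cons_val_zero, Matrix.cons_val_one, Multiset.coe_card,
      Multiset.sum_coe, List.length_append, List.length_replicate, List.sum_append,
      List.sum_replicate, nsmul_eq_mul]
    push_cast
    exact ⟨⟨by omega, by linarith⟩, by omega, by linarith⟩
  · rw [Fin.sum_univ_two, Multiset.coe_eq_coe.2 hL, List.replicate_add]
    simp only [Matrix.cons_val_zero, Matrix.cons_val_one, ← Multiset.coe_add]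
    abel

/-- The configuration of the online algorithm `A` after the input `L`: the contents of all its
nonempty bins, with bin indices forgotten. It decides which sizes the next item may have without
forcing a new bin. -/
def onlineState (A : List ℝ → ℕ) (L : List ℝ) : Multiset (Multiset ℝ) :=
  (Finset.univ.image (onlinePacking A L)).val.map (binContents L (onlinePacking A L))

/-- An item of size `x` can be added to a bin with contents `C` under cardinality
constraint `k`. -/
def Fits (k : ℕ) (x : ℝ) (C : Multiset ℝ) : Prop :=
  C.card < k ∧ C.sum + x ≤ 1

section OnlineState

variable {k : ℕ} {A : List ℝ → ℕ} {L : List ℝ} {x : ℝ}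

theorem card_onlineState (A : List ℝ → ℕ) (L : List ℝ) :
    (onlineState A L).card = onlineBins A L :=
  Multiset.card_map _ _

theorem onlinePacking_cons (A : List ℝ → ℕ) (x : ℝ) (L : List ℝ) :
    onlinePacking A (x :: L) =
      (Fin.cons (A [x]) (onlinePacking (fun P => A (x :: P)) L) : Fin (L.length + 1) → ℕ) := by
  funext i
  cases i using Fin.cases <;> rfl

theorem binContents_onlinePacking_append_singleton (A : List ℝ → ℕ) (L : List ℝ) (x : ℝ)
    (b : ℕ) :
    binContents (L ++ [x]) (onlinePacking A (L ++ [x])) b =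
      binContents L (onlinePacking A L) b + if A (L ++ [x]) = b then {x} else 0 := by
  induction L generalizing A with
  | nil => exact (binContents_cons x [] (A [x]) Fin.elim0 b).trans (add_comm _ _)
  | cons y L ih =>
    rw [List.cons_append, onlinePacking_cons, binContents_cons, ih, onlinePacking_cons,
      binContents_cons, add_assoc]

theorem mem_image_onlinePacking {b : ℕ} :
    b ∈ Finset.univ.image (onlinePacking A L) ↔ binContents L (onlinePacking A L) b ≠ 0 := by
  simp [binContents_eq_zero_iff]

theorem image_onlinePacking_append_singleton (A : List ℝ → ℕ) (L : List ℝ) (x : ℝ) :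
    Finset.univ.image (onlinePacking A (L ++ [x])) =
      insert (A (L ++ [x])) (Finset.univ.image (onlinePacking A L)) := by
  ext b
  rw [mem_image_onlinePacking, binContents_onlinePacking_append_singleton, Finset.mem_insert,
    mem_image_onlinePacking]
  by_cases hb : A (L ++ [x]) = b <;> simp [hb, Ne.symm]

theorem onlineState_append_singleton (A : List ℝ → ℕ) (L : List ℝ) (x : ℝ) :
    onlineState A (L ++ [x]) = {x} ::ₘ onlineState A L ∨
      ∃ C ∈ onlineState A L,
        onlineState A (L ++ [x]) = (x ::ₘ C) ::ₘ (onlineState A L).erase C := by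
  have contents := binContents_onlinePacking_append_singleton A L x
  unfold onlineState
  rw [image_onlinePacking_append_singleton]
  set c := A (L ++ [x])
  have unchanged {s : Finset ℕ} (hs : c ∉ s) :
      s.val.map (binContents (L ++ [x]) (onlinePacking A (L ++ [x]))) =
        s.val.map (binContents L (onlinePacking A L)) :=
    Multiset.map_congr rfl fun b hb => by
      rw [contents, if_neg (ne_of_mem_of_not_mem hb hs).symm, add_zero]
  by_cases hc : c ∈ Finset.univ.image (onlinePacking A L)
  · right
    refine ⟨_, Multiset.mem_map_of_mem _ hc, ?_⟩
    rw [Finset.insert_eq_of_mem hc]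
    obtain ⟨s, hs, hU⟩ : ∃ s, c ∉ s ∧ insert c s = Finset.univ.image (onlinePacking A L) :=
      ⟨_, Finset.notMem_erase _ _, Finset.insert_erase hc⟩
    rw [← hU, Finset.insert_val_of_notMem hs, Multiset.map_cons, Multiset.map_cons,
      Multiset.erase_cons_head, unchanged hs, contents, if_pos rfl, add_comm,
      Multiset.singleton_add]
  · left
    rw [Finset.insert_val_of_notMem hc, Multiset.map_cons, unchanged hc, contents, if_pos rfl,
      not_not.1 (mem_image_onlinePacking.not.1 hc), zero_add]

theorem sum_onlineState (A : List ℝ → ℕ) (L : List ℝ) : (onlineState A L).sum = L := by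
  induction L using List.reverseRecOn with
  | nil => simp [onlineState]
  | append_singleton L x ih =>
    rw [← Multiset.coe_add, ← ih]
    obtain opened | ⟨C, hC, joined⟩ := onlineState_append_singleton A L x
    · rw [opened, Multiset.sum_cons, add_comm]
      rfl
    · rw [joined, Multiset.sum_cons, ← Multiset.sum_erase hC, ← Multiset.singleton_add,
        add_assoc, add_comm]
      rfl

theorem onlineState_eq_singleton (hL : L ≠ []) (h : onlineBins A L ≤ 1) :
    onlineState A L = {(L : Multiset ℝ)} := by
  have hsum := sum_onlineState A L
  rw [← card_onlineState] at h
  obtain empty | single := Nat.le_one_iff_eq_zero_or_eq_one.1 h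
  · rw [Multiset.card_eq_zero.1 empty, Multiset.sum_zero, eq_comm, Multiset.coe_eq_zero] at hsum
    exact absurd hsum hL
  · obtain ⟨C, hC⟩ := Multiset.card_eq_one.1 single
    rw [hC, Multiset.sum_singleton] at hsum
    rw [hC, hsum]

theorem IsFeasible.of_mem_onlineState (hA : IsFeasible k L (onlinePacking A L)) {C : Multiset ℝ}
    (hC : C ∈ onlineState A L) : C.card ≤ k ∧ C.sum ≤ 1 := by
  obtain ⟨b, -, rfl⟩ := Multiset.mem_map.1 hC
  exact isFeasible_iff_binContents.1 hA b

theorem onlineState_append_singleton_of_valid (hA : OnlineValid k A)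
    (hL : ValidInput (L ++ [x])) :
    onlineState A (L ++ [x]) = {x} ::ₘ onlineState A L ∨
      ∃ C ∈ onlineState A L, Fits k x C ∧
        onlineState A (L ++ [x]) = (x ::ₘ C) ::ₘ (onlineState A L).erase C := by
  refine (onlineState_append_singleton A L x).imp_right fun ⟨C, hC, joined⟩ => ⟨C, hC, ?_, joined⟩
  have hxC := (hA _ hL).of_mem_onlineState (joined ▸ Multiset.mem_cons_self _ _)
  rw [Multiset.card_cons, Multiset.sum_cons, add_comm x] at hxC
  exact hxC

theorem onlineState_append_singleton_of_not_fits (hA : OnlineValid k A)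
    (hL : ValidInput (L ++ [x])) (hx : ∀ C ∈ onlineState A L, ¬ Fits k x C) :
    onlineState A (L ++ [x]) = {x} ::ₘ onlineState A L :=
  (onlineState_append_singleton_of_valid hA hL).resolve_right
    fun ⟨C, hC, fits, _⟩ => hx C hC fits

theorem not_fits_of_card_eq {C : Multiset ℝ} (hC : C.card = k) : ¬ Fits k x C :=
  fun h => h.1.ne hC

theorem onlineState_append_pair_of_full (hA : OnlineValid k A) (hL : ValidInput L)
    (hx : 0 < x ∧ x ≤ 1) {F : Multiset ℝ} (hF : F.card = k) (hstate : onlineState A L = {F}) :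
    onlineState A (L ++ [x, x]) = {{x}, {x}, F} ∨ onlineState A (L ++ [x, x]) = {{x, x}, F} := by
  have valid₁ : ValidInput (L ++ [x]) := hL.append (.replicate 1 hx)
  have valid₂ : ValidInput (L ++ [x] ++ [x]) := valid₁.append (.replicate 1 hx)
  have first : onlineState A (L ++ [x]) = {{x}, F} := by
    rw [onlineState_append_singleton_of_not_fits hA valid₁, hstate]
    · rfl
    · simp [hstate, not_fits_of_card_eq hF]
  rw [show L ++ [x, x] = L ++ [x] ++ [x] by simp]
  obtain apart | ⟨C, hC, fits, together⟩ := onlineState_append_singleton_of_valid hA valid₂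
  · left
    rw [apart, first]
    rfl
  · right
    rw [first, Multiset.insert_eq_cons, Multiset.mem_cons, Multiset.mem_singleton] at hC
    obtain rfl | rfl := hC
    · rw [together, first, Multiset.insert_eq_cons, Multiset.erase_cons_head]
      rfl
    · exact absurd fits (not_fits_of_card_eq hF)

theorem onlineState_append_replicate (hA : OnlineValid k A) (hL : ValidInput L)
    (hx : 1 / 2 < x ∧ x ≤ 1) (hfit : ∀ C ∈ onlineState A L, ¬ Fits k x C) (n : ℕ) :
    onlineState A (L ++ List.replicate n x) = Multiset.replicate n {x} + onlineState A L := by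
  induction n with
  | zero => simp
  | succ n ih =>
    have valid : ValidInput (L ++ List.replicate n x ++ [x]) :=
      (hL.append (.replicate n ⟨by linarith, hx.2⟩)).append (.replicate 1 ⟨by linarith, hx.2⟩)
    rw [List.replicate_succ', ← List.append_assoc,
      onlineState_append_singleton_of_not_fits hA valid, ih, Multiset.replicate_succ,
      Multiset.cons_add]
    intro C hC
    rw [ih, Multiset.mem_add] at hC
    obtain hC | hC := hC
    · rw [Multiset.eq_of_mem_replicate hC]
      simp only [Fits, Multiset.sum_singleton]
      exact fun h => by linarith [h.2]
    · exact hfit C hC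

end OnlineState

theorem exists_two_mul_OPT_le_of_apart {k : ℕ} {A : List ℝ → ℕ} {ε : ℝ} (hk : 4 ≤ k)
    (hA : OnlineValid k A) (hε : 0 ≤ ε) (hkε : k * ε ≤ 1 / 20)
    (hvalid : ValidInput (List.replicate k ε ++ [2 / 5, 2 / 5]))
    (hstate : onlineState A (List.replicate k ε ++ [2 / 5, 2 / 5]) =
      {{2 / 5}, {2 / 5}, Multiset.replicate k ε}) :
    ∃ L, ValidInput L ∧ L ≠ [] ∧ 2 * OPT k L ≤ onlineBins A L := by
  let L := List.replicate k ε ++ [2 / 5, 2 / 5] ++ List.replicate 1 (13 / 20)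
  have offline : OPT k L ≤ 2 := by
    have perm : L.Perm (List.replicate k ε ++ ([2 / 5, 2 / 5] ++ [13 / 20])) := by
      simp [L]
    exact OPT_le_two_of_perm hk hε perm (by norm_num; linarith) (by norm_num; linarith)
  have not_fits : ∀ C ∈ onlineState A (List.replicate k ε ++ [2 / 5, 2 / 5]),
      ¬ Fits k (13 / 20) C := by
    simp only [hstate, Multiset.insert_eq_cons, Multiset.mem_cons, Multiset.mem_singleton]
    rintro C (rfl | rfl | rfl)
    · norm_num [Fits]
    · norm_num [Fits]
    · exact not_fits_of_card_eq (Multiset.card_replicate k ε)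
  have online : onlineBins A L = 4 := by
    rw [← card_onlineState, onlineState_append_replicate hA hvalid (by norm_num) not_fits, hstate]
    rfl
  exact ⟨L, hvalid.append (.replicate 1 (by norm_num)), by simp [L], by omega⟩

theorem exists_two_mul_OPT_le_of_together {k : ℕ} {A : List ℝ → ℕ} {ε : ℝ} (hk : 4 ≤ k)
    (hA : OnlineValid k A) (hε : 0 ≤ ε) (hkε : k * ε ≤ 1 / 20)
    (hvalid : ValidInput (List.replicate k ε ++ [2 / 5, 2 / 5]))
    (hstate : onlineState A (List.replicate k ε ++ [2 / 5, 2 / 5]) =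
      {{2 / 5, 2 / 5}, Multiset.replicate k ε}) :
    ∃ L, ValidInput L ∧ L ≠ [] ∧ 2 * OPT k L ≤ onlineBins A L := by
  let L := List.replicate k ε ++ [2 / 5, 2 / 5] ++ List.replicate 2 (11 / 20)
  have offline : OPT k L ≤ 2 := by
    have perm : L.Perm (List.replicate k ε ++ ([2 / 5, 11 / 20] ++ [2 / 5, 11 / 20])) := by
      simpa [L] using ((List.Perm.swap _ _ _).cons _).append_left _
    exact OPT_le_two_of_perm hk hε perm (by norm_num; linarith) (by norm_num; linarith)
  have not_fits : ∀ C ∈ onlineState A (List.replicate k ε ++ [2 / 5, 2 / 5]),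
      ¬ Fits k (11 / 20) C := by
    simp only [hstate, Multiset.insert_eq_cons, Multiset.mem_cons, Multiset.mem_singleton]
    rintro C (rfl | rfl)
    · norm_num [Fits]
    · exact not_fits_of_card_eq (Multiset.card_replicate k ε)
  have online : onlineBins A L = 4 := by
    rw [← card_onlineState, onlineState_append_replicate hA hvalid (by norm_num) not_fits, hstate]
    rfl
  exact ⟨L, hvalid.append (.replicate 2 (by norm_num)), by simp [L], by omega⟩

/-- For every k ≥ 4 and every deterministic online algorithm `A` for
bin packing with cardinality constraint `k`, there is an input `L` with
A(L) ≥ 2·OPT(L) (and OPT(L) ≥ 1), so the absolute competitive ratio of `A`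
is at least 2. -/
theorem online_lb_two (k : ℕ) (hk : 4 ≤ k) (A : List ℝ → ℕ) (hA : OnlineValid k A) :
    ∃ L : List ℝ, ValidInput L ∧ 1 ≤ OPT k L ∧
      2 * (OPT k L : ℝ) ≤ (onlineBins A L : ℝ) := by
  suffices ∃ L, ValidInput L ∧ L ≠ [] ∧ 2 * OPT k L ≤ onlineBins A L by
    obtain ⟨L, valid, ne_nil, ratio⟩ := this
    exact ⟨L, valid, one_le_OPT (hA L valid) ne_nil, by exact_mod_cast ratio⟩
  have hk' : (4 : ℝ) ≤ k := by exact_mod_cast hk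
  obtain ⟨ε, hε, hkε⟩ : ∃ ε : ℝ, 0 < ε ∧ k * ε = 1 / 20 :=
    ⟨1 / (20 * k), by positivity, by field_simp⟩
  let T := List.replicate k ε
  have tiny_valid : ValidInput T := .replicate k ⟨hε, by nlinarith⟩
  have tiny_ne_nil : T ≠ [] := by simp [T]; omega
  by_cases several : 2 ≤ onlineBins A T
  · have offline : OPT k T ≤ 1 := OPT_le_one (by simp [T]) (by simp [T]; linarith)
    exact ⟨T, tiny_valid, tiny_ne_nil, by omega⟩
  have tiny_state : onlineState A T = {Multiset.replicate k ε} :=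
    onlineState_eq_singleton tiny_ne_nil (by omega)
  have medium_valid : ValidInput (T ++ [2 / 5, 2 / 5]) :=
    tiny_valid.append (.replicate 2 (by norm_num))
  obtain apart | together := onlineState_append_pair_of_full (x := 2 / 5) hA tiny_valid
    (by norm_num) (Multiset.card_replicate k ε) tiny_state
  · exact exists_two_mul_OPT_le_of_apart hk hA hε.le hkε.le medium_valid apart
  · exact exists_two_mul_OPT_le_of_together hk hA hε.le hkε.le medium_valid together
end
end

section
/- For k = 5 and every deterministic online algorithm A for bin packing with cardinality constraint k, the asymptotic competitive ratio of A is at least 3/2: for every ε > 0 and every N there exists an input L with OPT(L) ≥ N and A(L) ≥ (3/2 − ε)·OPT(L). -/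
/-!
An adversary presents four phases of items, of sizes `0.01`, `0.21`, `0.26` and `0.51`, and may stop
after any of them. Stopping after phase `1`, `2`, `3`, `4` leaves an input that fits into `M`,
`3 M`, `5 M`, `10 M` bins. Let `A₁, …, A₄` be the numbers of bins the algorithm uses at these
moments. Give the items of the four phases the weights `1, 1, 1, 2`, and let every bin earn the
prices `2, 1, 1, 2` at the ends of the phases from its opening on, so that a bin opened in phase
`1`, `2`, `3`, `4` earns `6`, `4`, `3`, `2`. No bin weighs more than it earns, so the total weight
`45 M` is at most `2 A₁ + A₂ + A₃ + 2 A₄`. If every `A_j` were below `3/2` times the optimum,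
this sum would be below `3/2 (2 M + 3 M + 5 M + 20 M) = 45 M`.
-/

open scoped Classical
noncomputable section

section Packing

variable {k : ℕ} {L : List ℝ}

theorem exists_isFeasible_binsUsed_eq_OPT (hk : 0 < k) (hL : ValidInput L) :
    ∃ f, IsFeasible k L f ∧ binsUsed L f = OPT k L := by
  have oneItemPerBin : IsFeasible k L (fun i => i) := by
    intro b
    have hcard : (Finset.univ.filter fun i : Fin L.length => (i : ℕ) = b).card ≤ 1 :=
      Finset.card_le_one.2 fun i hi j hj => Fin.ext <| by
        rw [(Finset.mem_filter.1 hi).2, (Finset.mem_filter.1 hj).2]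
    refine ⟨hcard.trans hk, ?_⟩
    calc ∑ i ∈ Finset.univ.filter fun i : Fin L.length => (i : ℕ) = b, L.get i
        ≤ (Finset.univ.filter fun i : Fin L.length => (i : ℕ) = b).card • (1 : ℝ) :=
          Finset.sum_le_card_nsmul _ _ _ fun i _ => (hL _ (L.get_mem i)).2
      _ ≤ 1 := by simpa using hcard
  exact Nat.sInf_mem (s := {n | ∃ f, IsFeasible k L f ∧ binsUsed L f = n})
    ⟨_, _, oneItemPerBin, rfl⟩

theorem length_le_mul_OPT (hk : 0 < k) (hL : ValidInput L) : L.length ≤ k * OPT k L := by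
  obtain ⟨f, hf, hfOPT⟩ := exists_isFeasible_binsUsed_eq_OPT hk hL
  rw [← hfOPT, ← Fintype.card_fin L.length]
  exact Finset.card_le_mul_card_image Finset.univ k fun b _ => (hf b).1

theorem exists_subset_map_val_eq {ι α : Type*} {s : ι → α} {S : Finset ι} {B : Multiset α}
    (h : B ≤ S.val.map s) : ∃ T ⊆ S, T.val.map s = B := by
  obtain ⟨l, hl⟩ := Quot.exists_rep S.val
  obtain ⟨b, rfl⟩ := Quot.exists_rep B
  rw [← hl] at h
  obtain ⟨b', hb', hsub⟩ : b.Subperm (l.map s) := h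
  obtain ⟨l', hl', rfl⟩ := List.sublist_map_iff.1 hsub
  have hle : (l' : Multiset ι) ≤ S.val := hl ▸ hl'.subperm
  exact ⟨⟨l', Multiset.nodup_of_le hle S.nodup⟩, Multiset.subset_of_le hle,
    Multiset.coe_eq_coe.2 hb'⟩

theorem exists_bin_assignment_of_map_val_eq_sum {ι α : Type*} {s : ι → α} {p : Multiset α → Prop}
    (hp : p 0) {P : Multiset (Multiset α)} (hP : ∀ B ∈ P, p B) {S : Finset ι}
    (hS : S.val.map s = P.sum) :
    ∃ f : ι → ℕ, (∀ i ∈ S, f i < Multiset.card P) ∧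
      ∀ b, p ((S.filter fun i => f i = b).val.map s) := by
  induction P using Multiset.induction generalizing S with
  | empty =>
    obtain rfl : S = ∅ := by simpa using hS
    exact ⟨fun _ => 0, by simp, by simpa using hp⟩
  | cons B P ih =>
    rw [Multiset.sum_cons] at hS
    obtain ⟨T, hTS, hT⟩ := exists_subset_map_val_eq (hS ▸ Multiset.le_add_right B P.sum)
    have hrest : (S \ T).val.map s = P.sum := by
      rw [← add_right_inj B, ← hS, ← hT, ← Multiset.map_add, Finset.sdiff_val,
        add_tsub_cancel_of_le (Finset.val_le_iff.2 hTS)]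
    obtain ⟨f, hf, hfp⟩ := ih (fun C hC => hP C (Multiset.mem_cons_of_mem hC)) hrest
    -- `B` receives the index `card P`, and the bins in `P` occupy the indices below it.
    refine ⟨fun i => if i ∈ T then Multiset.card P else f i, fun i hi => ?_, fun b => ?_⟩
    · have := hf i
      rw [Multiset.card_cons]
      grind
    · by_cases hb : b = Multiset.card P
      · have hfiber : (S.filter fun i => (if i ∈ T then Multiset.card P else f i) = b) = T := by
          grind
        rw [hfiber, hT]
        exact hP B (Multiset.mem_cons_self B P)
      · have hfiber : (S.filter fun i => (if i ∈ T then Multiset.card P else f i) = b) =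
            (S \ T).filter fun i => f i = b := by
          grind
        rw [hfiber]
        exact hfp b

theorem OPT_le_card_of_coe_eq_sum {P : Multiset (Multiset ℝ)}
    (hP : ∀ B ∈ P, Multiset.card B ≤ k ∧ B.sum ≤ 1) (hL : (L : Multiset ℝ) = P.sum) :
    OPT k L ≤ Multiset.card P := by
  have hget : (Finset.univ : Finset (Fin L.length)).val.map L.get = P.sum := by
    rw [← hL, Fin.univ_val_map, List.ofFn_get]
  obtain ⟨f, hf, hfP⟩ := exists_bin_assignment_of_map_val_eq_sum
    (p := fun B : Multiset ℝ => Multiset.card B ≤ k ∧ B.sum ≤ 1) (by simp) hP hget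
  have hfeas : IsFeasible k L f := fun b => by
    simpa only [Multiset.card_map, Finset.card_val, Finset.sum_map_val] using hfP b
  calc OPT k L ≤ binsUsed L f := Nat.sInf_le ⟨f, hfeas, rfl⟩
    _ ≤ (Finset.range (Multiset.card P)).card :=
        Finset.card_le_card <| Finset.image_subset_iff.2 fun i hi => Finset.mem_range.2 (hf i hi)
    _ = Multiset.card P := Finset.card_range _

end Packing

section Online

variable {A : List ℝ → ℕ} {k : ℕ} {L : List ℝ}

theorem onlineBins_of_isPrefix {P : List ℝ} (h : P <+: L) :
    onlineBins A P =
      ((Finset.univ.filter fun i : Fin L.length => (i : ℕ) < P.length).image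
        (onlinePacking A L)).card := by
  obtain ⟨Q, rfl⟩ := h
  have htake {i : ℕ} (hi : i < P.length) : (P ++ Q).take (i + 1) = P.take (i + 1) :=
    List.take_append_of_le_length hi
  unfold onlineBins binsUsed
  congr 1
  ext b
  simp only [Finset.mem_image, Finset.mem_filter, Finset.mem_univ, true_and, onlinePacking]
  constructor
  · rintro ⟨i, rfl⟩
    exact ⟨⟨i, by simp; omega⟩, i.2, by rw [htake i.2]⟩
  · rintro ⟨i, hi, rfl⟩
    exact ⟨⟨i, hi⟩, by rw [htake hi]⟩

/-- Weak duality: an item pays `w i`, and a bin earns `c j` for each prefix `P j` of the input after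
which it is in use. -/
theorem sum_weight_le_sum_onlineBins_nsmul {R ι : Type*} [AddCommMonoid R] [PartialOrder R]
    [IsOrderedAddMonoid R] [Fintype ι] (hA : OnlineValid k A) (hL : ValidInput L)
    {P : ι → List ℝ} (hP : ∀ j, P j <+: L) {w : Fin L.length → R} {c : ι → R}
    (hw : ∀ S : Finset (Fin L.length), S.card ≤ k → ∑ i ∈ S, L.get i ≤ 1 →
      ∑ i ∈ S, w i ≤ ∑ j with ∃ i ∈ S, (i : ℕ) < (P j).length, c j) :
    ∑ i, w i ≤ ∑ j, onlineBins A (P j) • c j := by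
  set f := onlinePacking A L
  set bin : ℕ → Finset (Fin L.length) := fun b => Finset.univ.filter fun i => f i = b
  set used : ι → Finset ℕ := fun j =>
    (Finset.univ.filter fun i : Fin L.length => (i : ℕ) < (P j).length).image f
  have mem_used (b : ℕ) (j : ι) : (∃ i ∈ bin b, (i : ℕ) < (P j).length) ↔ b ∈ used j := by
    simp [bin, used, and_comm]
  have used_subset (j : ι) : used j ⊆ Finset.univ.image f :=
    Finset.image_subset_image (Finset.filter_subset _ _)
  calc ∑ i, w i = ∑ b ∈ Finset.univ.image f, ∑ i ∈ bin b, w i :=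
        (Finset.sum_fiberwise_of_maps_to (fun i hi => Finset.mem_image_of_mem f hi) w).symm
    _ ≤ ∑ b ∈ Finset.univ.image f, ∑ j with ∃ i ∈ bin b, (i : ℕ) < (P j).length, c j :=
        Finset.sum_le_sum fun b _ => hw (bin b) (hA L hL b).1 (hA L hL b).2
    _ = ∑ j, ∑ _b ∈ used j, c j := by
        refine Finset.sum_comm' fun _ j => ?_
        simp only [Finset.mem_filter, Finset.mem_univ, true_and, mem_used, and_true]
        exact and_iff_right_of_imp fun hb => used_subset j hb
    _ = ∑ j, onlineBins A (P j) • c j := by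
        simp only [Finset.sum_const, onlineBins_of_isPrefix (hP _), used, f]

end Online

section Weight

/-- The weight of an item of size `x`: twice as much for an item larger than half a bin. -/
def weight (x : ℝ) : ℕ := if 1 / 2 < x then 2 else 1

theorem weight_lt_mul {n : ℕ} (hn : 4 ≤ n) {x : ℝ} (hx : 1 / n < x) : weight x < n * x := by
  have hn' : (4 : ℝ) ≤ n := mod_cast hn
  unfold weight
  split_ifs with h
  · calc ((2 : ℕ) : ℝ) ≤ n * (1 / 2) := by push_cast; linarith
      _ < n * x := by gcongr
  · simpa using (div_lt_iff₀' (by linarith)).1 hx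

variable {ι : Type*} {S : Finset ι} {s : ι → ℝ}

theorem sum_weight_lt {n : ℕ} (hn : 4 ≤ n) (hs : ∀ i ∈ S, 1 / n < s i) (hsum : ∑ i ∈ S, s i ≤ 1) :
    ∑ i ∈ S, weight (s i) < n := by
  rcases S.eq_empty_or_nonempty with rfl | hS
  · simp; omega
  · have : ∑ i ∈ S, (weight (s i) : ℝ) < n := calc
      ∑ i ∈ S, (weight (s i) : ℝ) < ∑ i ∈ S, n * s i :=
        Finset.sum_lt_sum_of_nonempty hS fun i hi => weight_lt_mul hn (hs i hi)
      _ = n * ∑ i ∈ S, s i := (Finset.mul_sum _ _ _).symm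
      _ ≤ n := mul_le_of_le_one_right (Nat.cast_nonneg n) hsum
    exact_mod_cast this

theorem card_filter_half_lt_le_one (hs : ∀ i ∈ S, 0 ≤ s i) (hsum : ∑ i ∈ S, s i ≤ 1) :
    (S.filter fun i => 1 / 2 < s i).card ≤ 1 := by
  refine Finset.card_le_one.2 fun i hi j hj => ?_
  by_contra hij
  rw [Finset.mem_filter] at hi hj
  have hpair : ∑ l ∈ {i, j}, s l ≤ ∑ l ∈ S, s l :=
    Finset.sum_le_sum_of_subset_of_nonneg
      (Finset.insert_subset hi.1 (Finset.singleton_subset_iff.2 hj.1)) fun l hl _ => hs l hl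
  rw [Finset.sum_pair hij] at hpair
  linarith [hi.2, hj.2]

theorem sum_weight_eq_card_add :
    ∑ i ∈ S, weight (s i) = S.card + (S.filter fun i => 1 / 2 < s i).card := by
  rw [Finset.card_eq_sum_ones, Finset.card_filter, ← Finset.sum_add_distrib]
  refine Finset.sum_congr rfl fun i _ => ?_
  unfold weight
  split_ifs <;> rfl

theorem sum_weight_le_card_add_one (hs : ∀ i ∈ S, 0 ≤ s i) (hsum : ∑ i ∈ S, s i ≤ 1) :
    ∑ i ∈ S, weight (s i) ≤ S.card + 1 := by
  rw [sum_weight_eq_card_add]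
  gcongr
  exact card_filter_half_lt_le_one hs hsum

theorem sum_weight_le_two (hs : ∀ i ∈ S, 1 / 2 < s i) (hsum : ∑ i ∈ S, s i ≤ 1) :
    ∑ i ∈ S, weight (s i) ≤ 2 := by
  have hcard : (S.filter fun i => 1 / 2 < s i).card ≤ 1 :=
    card_filter_half_lt_le_one (fun i hi => by linarith [hs i hi]) hsum
  rw [sum_weight_eq_card_add]
  rw [Finset.filter_true_of_mem hs] at hcard ⊢
  omega

end Weight

section HardInput

/-- The item sizes of the four phases of the adversary. The last three exceed `1/5`, `1/4` and
`1/2` by so little that one item of each phase fits into a common bin. -/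
def itemSize : Fin 4 → ℝ
  | 0 => 1 / 100
  | 1 => 21 / 100
  | 2 => 26 / 100
  | 3 => 51 / 100

/-- The number of items that the adversary of scale `1` presents in each phase. -/
def itemCount : Fin 4 → ℕ
  | 0 => 5
  | 1 => 10
  | 2 => 10
  | 3 => 10

/-- The input that an adversary of scale `M` has presented by the end of phase `j`. -/
def hardInput (M : ℕ) (j : Fin 4) : List ℝ :=
  ((List.finRange 4).take (j + 1)).flatMap fun p =>
    List.replicate (itemCount p * M) (itemSize p)

/-- An offline packing, for `M = 1`, of `hardInput M j`; an item is recorded by its phase. -/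
def offlineBins : Fin 4 → Multiset (Multiset (Fin 4)) :=
  ![{{0, 0, 0, 0, 0}},
    {{0, 0, 1, 1, 1}, {0, 0, 1, 1, 1}, {0, 1, 1, 1, 1}},
    5 • {{0, 1, 1, 2, 2}},
    5 • {{0, 1, 2, 3}, {1, 2, 3}}]

/-- The dual price of the bins in use at the end of phase `j`. -/
def phasePrice : Fin 4 → ℕ := ![2, 1, 1, 2]

theorem itemSize_mono : Monotone itemSize :=
  Fin.monotone_iff_le_succ.2 fun p => by fin_cases p <;> norm_num [itemSize]

variable {M : ℕ}

theorem validInput_hardInput (j : Fin 4) : ValidInput (hardInput M j) := by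
  intro x hx
  obtain ⟨p, -, hp⟩ := List.mem_flatMap.1 hx
  rw [List.eq_of_mem_replicate hp]
  fin_cases p <;> norm_num [itemSize]

theorem length_hardInput (j : Fin 4) : (hardInput M j).length = ![5, 15, 25, 35] j * M := by
  fin_cases j <;> simp [hardInput, List.finRange_succ, itemCount, ← add_mul]

theorem hardInput_isPrefix {i j : Fin 4} (hij : i ≤ j) : hardInput M i <+: hardInput M j :=
  (List.take_prefix_take_left (Nat.succ_le_succ hij)).flatMap _

theorem get_hardInput_last (i : Fin (hardInput M 3).length) :
    (hardInput M 3).get i = if (i : ℕ) < 5 * M then itemSize 0 else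
      if (i : ℕ) < 15 * M then itemSize 1 else if (i : ℕ) < 25 * M then itemSize 2 else
      itemSize 3 := by
  have hphases : hardInput M 3 = List.replicate (5 * M) (itemSize 0) ++
      (List.replicate (10 * M) (itemSize 1) ++
        (List.replicate (10 * M) (itemSize 2) ++ List.replicate (10 * M) (itemSize 3))) := by
    simp [hardInput, List.finRange_succ, itemCount]
  simp only [List.get_eq_getElem, hphases, List.getElem_append, List.getElem_replicate,
    List.length_replicate]
  grind

theorem itemSize_le_get_hardInput_last {p : Fin 3} {i : Fin (hardInput M 3).length}
    (hi : (hardInput M p.castSucc).length ≤ i) : itemSize p.succ ≤ (hardInput M 3).get i := by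
  rw [length_hardInput] at hi
  rw [get_hardInput_last]
  fin_cases p <;>
    simp only [Fin.zero_eta, Fin.mk_one, Fin.reduceFinMk, Fin.castSucc_zero, Fin.castSucc_one,
      Fin.reduceCastSucc, Matrix.cons_val] at hi <;>
    split_ifs <;> first | omega | exact itemSize_mono (by decide)

theorem coe_hardInput_eq_sum (j : Fin 4) :
    (hardInput M j : Multiset ℝ) = ∑ p ∈ Finset.Iic j, (itemCount p * M) • {itemSize p} := by
  have hphases : (((List.finRange 4).take (j + 1) : List (Fin 4)) : Multiset (Fin 4)) =
      (Finset.Iic j).val := by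
    revert j; decide
  rw [hardInput, ← Multiset.coe_bind, hphases]
  simp only [Multiset.coe_replicate, Multiset.nsmul_singleton]
  rfl

theorem sum_weight_hardInput : ∑ i, weight ((hardInput M 3).get i) = 45 * M := by
  calc ∑ i, weight ((hardInput M 3).get i) = (Multiset.map weight (hardInput M 3)).sum := by
        rw [Multiset.map_coe, Multiset.sum_coe]
        exact Fin.sum_univ_fun_getElem (hardInput M 3) weight
    _ = ∑ p, itemCount p * M * weight (itemSize p) := by
        rw [coe_hardInput_eq_sum]
        change (Multiset.sumAddMonoidHom.comp (Multiset.mapAddMonoidHom weight)) _ = _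
        rw [map_sum]
        refine Finset.sum_congr rfl fun p _ => ?_
        simp [Multiset.map_nsmul, Multiset.sum_nsmul]
    _ = 45 * M := by
        norm_num [itemCount, weight, itemSize, Fin.sum_univ_four]
        ring

theorem sum_offlineBins (j : Fin 4) :
    (offlineBins j).sum = ∑ p ∈ Finset.Iic j, itemCount p • ({p} : Multiset (Fin 4)) := by
  revert j; decide

theorem coe_hardInput_eq_sum_offlineBins (j : Fin 4) :
    (hardInput M j : Multiset ℝ) = (M • (offlineBins j).map (Multiset.map itemSize)).sum := by
  have hmap : ((offlineBins j).map (Multiset.map itemSize)).sum =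
      (offlineBins j).sum.map itemSize :=
    (map_multiset_sum (Multiset.mapAddMonoidHom itemSize) (offlineBins j)).symm
  rw [coe_hardInput_eq_sum, Multiset.sum_nsmul, hmap, sum_offlineBins,
    ← Multiset.coe_mapAddMonoidHom, map_sum, Finset.smul_sum]
  refine Finset.sum_congr rfl fun p _ => ?_
  rw [map_nsmul, smul_smul, mul_comm, Multiset.coe_mapAddMonoidHom, Multiset.map_singleton]

theorem card_offlineBins (j : Fin 4) : Multiset.card (offlineBins j) = ![1, 3, 5, 10] j := by
  revert j; decide

theorem card_le_five_and_sum_le_one_of_mem_offlineBins {j : Fin 4} {B : Multiset (Fin 4)}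
    (hB : B ∈ offlineBins j) : Multiset.card B ≤ 5 ∧ (B.map itemSize).sum ≤ 1 := by
  have hB' : B = {0, 0, 0, 0, 0} ∨ B = {0, 0, 1, 1, 1} ∨ B = {0, 1, 1, 1, 1} ∨
      B = {0, 1, 1, 2, 2} ∨ B = {0, 1, 2, 3} ∨ B = {1, 2, 3} := by
    fin_cases j <;>
      simp only [offlineBins, Matrix.cons_val, Multiset.mem_nsmul, Multiset.insert_eq_cons,
        Multiset.mem_cons, Multiset.mem_singleton, Fin.reduceFinMk, Fin.zero_eta, Fin.mk_one]
        at hB <;>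
      tauto
  rcases hB' with rfl | rfl | rfl | rfl | rfl | rfl <;> norm_num [itemSize]

theorem OPT_hardInput_le (j : Fin 4) : OPT 5 (hardInput M j) ≤ ![1, 3, 5, 10] j * M := by
  have hfit : ∀ B ∈ M • (offlineBins j).map (Multiset.map itemSize),
      Multiset.card B ≤ 5 ∧ B.sum ≤ 1 := by
    intro B hB
    obtain ⟨C, hC, rfl⟩ := Multiset.mem_map.1 (Multiset.mem_of_mem_nsmul hB)
    rw [Multiset.card_map]
    exact card_le_five_and_sum_le_one_of_mem_offlineBins hC
  calc OPT 5 (hardInput M j) ≤ Multiset.card (M • (offlineBins j).map (Multiset.map itemSize)) :=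
        OPT_le_card_of_coe_eq_sum hfit (coe_hardInput_eq_sum_offlineBins j)
    _ = ![1, 3, 5, 10] j * M := by
        rw [Multiset.card_nsmul, Multiset.card_map, card_offlineBins, mul_comm]

end HardInput

section LowerBound

variable {M : ℕ}

theorem sum_phasePrice_Ici (p : Fin 4) : ∑ j ∈ Finset.Ici p, phasePrice j = ![6, 4, 3, 2] p := by
  revert p; decide

theorem le_sum_phasePrice_of_exists_lt_length {S : Finset (Fin (hardInput M 3).length)} {p : Fin 4}
    (hp : ∃ i ∈ S, (i : ℕ) < (hardInput M p).length) :
    ![6, 4, 3, 2] p ≤ ∑ j with ∃ i ∈ S, (i : ℕ) < (hardInput M j).length, phasePrice j := by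
  obtain ⟨i, hiS, hi⟩ := hp
  rw [← sum_phasePrice_Ici]
  exact Finset.sum_le_sum_of_subset fun j hj => Finset.mem_filter.2 ⟨Finset.mem_univ j, i, hiS,
    hi.trans_le (hardInput_isPrefix (Finset.mem_Ici.1 hj)).length_le⟩

theorem sum_weight_le_sum_phasePrice {S : Finset (Fin (hardInput M 3).length)} (hcard : S.card ≤ 5)
    (hsum : ∑ i ∈ S, (hardInput M 3).get i ≤ 1) :
    ∑ i ∈ S, weight ((hardInput M 3).get i) ≤
      ∑ j with ∃ i ∈ S, (i : ℕ) < (hardInput M j).length, phasePrice j := by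
  have sizes_after {p : Fin 3} (hp : ¬∃ i ∈ S, (i : ℕ) < (hardInput M p.castSucc).length) :
      ∀ i ∈ S, itemSize p.succ ≤ (hardInput M 3).get i := fun i hi =>
    itemSize_le_get_hardInput_last (not_lt.1 fun hlt => hp ⟨i, hi, hlt⟩)
  by_cases h0 : ∃ i ∈ S, (i : ℕ) < (hardInput M 0).length
  · refine le_trans ?_ (le_sum_phasePrice_of_exists_lt_length h0)
    have hpos : ∀ i ∈ S, 0 ≤ (hardInput M 3).get i := fun i _ =>
      (validInput_hardInput 3 _ (List.get_mem _ i)).1.le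
    exact (sum_weight_le_card_add_one hpos hsum).trans (Nat.succ_le_succ hcard)
  by_cases h1 : ∃ i ∈ S, (i : ℕ) < (hardInput M 1).length
  · refine le_trans ?_ (le_sum_phasePrice_of_exists_lt_length h1)
    have hlarge : ∀ i ∈ S, 1 / (5 : ℕ) < (hardInput M 3).get i := fun i hi =>
      lt_of_lt_of_le (by norm_num [itemSize]) (sizes_after (p := 0) h0 i hi)
    exact Nat.le_of_lt_succ (sum_weight_lt (n := 5) (by norm_num) hlarge hsum)
  by_cases h2 : ∃ i ∈ S, (i : ℕ) < (hardInput M 2).length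
  · refine le_trans ?_ (le_sum_phasePrice_of_exists_lt_length h2)
    have hlarge : ∀ i ∈ S, 1 / (4 : ℕ) < (hardInput M 3).get i := fun i hi =>
      lt_of_lt_of_le (by norm_num [itemSize]) (sizes_after (p := 1) h1 i hi)
    exact Nat.le_of_lt_succ (sum_weight_lt le_rfl hlarge hsum)
  rcases S.eq_empty_or_nonempty with rfl | ⟨i, hi⟩
  · simp
  · refine le_trans ?_ (le_sum_phasePrice_of_exists_lt_length (p := 3) ⟨i, hi, i.2⟩)
    have hlarge : ∀ i ∈ S, 1 / 2 < (hardInput M 3).get i := fun i hi =>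
      lt_of_lt_of_le (by norm_num [itemSize] : 1 / 2 < itemSize 3) (sizes_after (p := 2) h2 i hi)
    exact sum_weight_le_two hlarge hsum

theorem mul_le_sum_onlineBins_mul_phasePrice {A : List ℝ → ℕ} (hA : OnlineValid 5 A) :
    45 * M ≤ ∑ j, onlineBins A (hardInput M j) * phasePrice j := by
  rw [← sum_weight_hardInput]
  exact sum_weight_le_sum_onlineBins_nsmul hA (validInput_hardInput 3)
    (fun j => hardInput_isPrefix (Fin.le_last j)) fun S => sum_weight_le_sum_phasePrice

theorem exists_three_mul_OPT_le_two_mul_onlineBins {A : List ℝ → ℕ} (hA : OnlineValid 5 A) (M : ℕ) :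
    ∃ j, 3 * OPT 5 (hardInput M j) ≤ 2 * onlineBins A (hardInput M j) := by
  by_contra! hlt
  have hbins := mul_le_sum_onlineBins_mul_phasePrice (M := M) hA
  simp only [Fin.sum_univ_four, phasePrice, Matrix.cons_val] at hbins
  have h0 := OPT_hardInput_le (M := M) 0
  have h1 := OPT_hardInput_le (M := M) 1
  have h2 := OPT_hardInput_le (M := M) 2
  have h3 := OPT_hardInput_le (M := M) 3
  simp only [Matrix.cons_val] at h0 h1 h2 h3
  linarith [hlt 0, hlt 1, hlt 2, hlt 3]

theorem le_OPT_hardInput (j : Fin 4) : M ≤ OPT 5 (hardInput M j) := by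
  have hlength : 5 * M ≤ (hardInput M j).length := by
    rw [length_hardInput]
    gcongr
    revert j; decide
  exact le_of_mul_le_mul_left
    (hlength.trans (length_le_mul_OPT (by norm_num) (validInput_hardInput j))) (by norm_num)

end LowerBound

/-- For k = 5, the asymptotic competitive ratio of every deterministic
online algorithm is at least 3/2. -/
theorem online_asymp_lb_k5 (A : List ℝ → ℕ) (hA : OnlineValid 5 A) :
    ∀ ε : ℝ, 0 < ε → ∀ N : ℕ, ∃ L : List ℝ, ValidInput L ∧ N ≤ OPT 5 L ∧
      ((3 / 2 : ℝ) - ε) * (OPT 5 L : ℝ) ≤ (onlineBins A L : ℝ) := by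
  intro ε hε N
  obtain ⟨j, hj⟩ := exists_three_mul_OPT_le_two_mul_onlineBins hA N
  refine ⟨hardInput N j, validInput_hardInput j, le_OPT_hardInput j, ?_⟩
  have hratio : (3 : ℝ) * OPT 5 (hardInput N j) ≤ 2 * onlineBins A (hardInput N j) := mod_cast hj
  calc (3 / 2 - ε) * (OPT 5 (hardInput N j) : ℝ) ≤ 3 / 2 * OPT 5 (hardInput N j) := by
        gcongr
        linarith
    _ ≤ onlineBins A (hardInput N j) := by linarith
end
end

section
/- For k ∈ {7, 8} and every deterministic online algorithm A for bin packing with cardinality constraint k, the asymptotic competitive ratio of A is at least (k² + 24k)/(k² + 10k + 24): for every ε > 0 and every N there exists an input L with OPT(L) ≥ N and A(L) ≥ ((k² + 24k)/(k² + 10k + 24) − ε)·OPT(L). This value equals 217/143 for k = 7 and 32/21 for k = 8. -/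
/-!
The adversary presents four batches of items, of sizes `1 / (200 k)`, `3 / 20 > 1 / 7`,
`17 / 50 > 1 / 3` and `101 / 200 > 1 / 2`, and may stop after any of them. The argument is weak
linear programming duality. Give the items of the four batches the weights `1, 1, 2, 2`, and the
four stopping times the multipliers `k - 4, 2, 2, 2`. In a feasible bin the total weight is at most
the sum of the multipliers of the stopping times at which the bin is already open. Summing
over the bins bounds the total weight `(k² + 24 k) N` of the items by the combination of the
algorithm's bin counts with these multipliers, whereas the same combination of the optima is at most
`(k² + 10 k + 24) N`. Hence the ratio is attained at one of the stopping times.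
-/

open scoped Classical
noncomputable section

open Finset

lemma OPT_le_binsUsed {k : ℕ} {L : List ℝ} {f : Fin L.length → ℕ} (hf : IsFeasible k L f) :
    OPT k L ≤ binsUsed L f :=
  Nat.sInf_le ⟨f, hf, rfl⟩

lemma length_le_mul_binsUsed {k : ℕ} {L : List ℝ} {f : Fin L.length → ℕ}
    (hf : IsFeasible k L f) : L.length ≤ k * binsUsed L f := by
  simpa [binsUsed] using card_le_mul_card_image (f := f) univ k fun b _ => (hf b).1

lemma length_le_mul_OPT_s3 {k : ℕ} {L : List ℝ} {f : Fin L.length → ℕ} (hf : IsFeasible k L f) :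
    L.length ≤ k * OPT k L := by
  obtain ⟨g, hg, hgOPT⟩ := Nat.sInf_mem (s := {n | ∃ f, IsFeasible k L f ∧ binsUsed L f = n})
    ⟨_, f, hf, rfl⟩
  exact (length_le_mul_binsUsed hg).trans_eq (congrArg (k * ·) hgOPT)

section Sequence

/-! ### Inputs given by a sequence of sizes -/

/-- The input consisting of the first `m` terms of a sequence of item sizes. It lets packings be
described by functions of the position in `ℕ`, independently of how many items have arrived. -/
def seqInput (a : ℕ → ℝ) (m : ℕ) : List ℝ := (List.range m).map a

/-- The bin into which the online algorithm `A` packs the item at position `i` of a sequence. -/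
def onlineBin (A : List ℝ → ℕ) (a : ℕ → ℝ) (i : ℕ) : ℕ := A (seqInput a (i + 1))

variable {a : ℕ → ℝ}

@[simp]
lemma length_seqInput (m : ℕ) : (seqInput a m).length = m := by simp [seqInput]

lemma take_seqInput {i m : ℕ} (h : i ≤ m) : (seqInput a m).take i = seqInput a i := by
  simp [seqInput, ← List.map_take, List.take_range, h]

lemma validInput_seqInput (ha : ∀ i, 0 < a i ∧ a i ≤ 1) (m : ℕ) : ValidInput (seqInput a m) := by
  intro x hx
  obtain ⟨i, -, rfl⟩ := List.mem_map.1 hx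
  exact ha i

lemma onlinePacking_seqInput (A : List ℝ → ℕ) (m : ℕ) :
    onlinePacking A (seqInput a m) = fun i => onlineBin A a i.1 := by
  funext i
  have hi : i.1 + 1 ≤ m := i.2.trans_eq (length_seqInput m)
  rw [onlinePacking, onlineBin, take_seqInput hi]

lemma isFeasible_seqInput_iff {k m : ℕ} {h : ℕ → ℕ} :
    IsFeasible k (seqInput a m) (fun i => h i.1) ↔
      ∀ b, #{i ∈ range m | h i = b} ≤ k ∧ ∑ i ∈ range m with h i = b, a i ≤ 1 := by
  refine forall_congr' fun b => ?_
  have hsize (i : Fin (seqInput a m).length) : (seqInput a m).get i = a i := by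
    rw [List.get_eq_getElem]
    simp only [seqInput, List.getElem_map, List.getElem_range]
  simp only [hsize, card_filter, sum_filter]
  rw [Fin.sum_univ_eq_sum_range (fun i => if h i = b then 1 else 0),
    Fin.sum_univ_eq_sum_range (fun i => if h i = b then a i else 0), length_seqInput]

lemma binsUsed_seqInput (m : ℕ) (h : ℕ → ℕ) :
    binsUsed (seqInput a m) (fun i => h i.1) = #((range m).image h) := by
  rw [binsUsed]
  congr 1
  ext b
  simp only [mem_image, mem_univ, true_and, Fin.exists_iff, length_seqInput, mem_range, exists_prop]

end Sequence

section Batches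

/-! ### Inputs arriving in batches -/

/-- The number of items before batch `j`, when batch `l` has `n l` items. -/
def batchStart (n : ℕ → ℕ) (j : ℕ) : ℕ := ∑ l ∈ range j, n l

/-- The batch containing the item at position `i`, that is, the last batch starting at or before
`i`. If there are at most `i` items in all, the supremum has the junk value `0`. -/
def batchIndex (n : ℕ → ℕ) (i : ℕ) : ℕ := sSup {j | batchStart n j ≤ i}

/-- The input consisting of the batches `0, …, t - 1`, where batch `j` has `n j` items of
size `s j`. -/
def batchInput (s : ℕ → ℝ) (n : ℕ → ℕ) (t : ℕ) : List ℝ :=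
  seqInput (s ∘ batchIndex n) (batchStart n t)

/-- The number of items of batch `j` that the packing `h` puts into bin `b`. -/
def binCount (n h : ℕ → ℕ) (b j : ℕ) : ℕ := #{x ∈ range (n j) | h (batchStart n j + x) = b}

/-- The set of bins that the packing `h` uses for the first `t` batches. -/
def openBins (n h : ℕ → ℕ) (t : ℕ) : Finset ℕ := (range (batchStart n t)).image h

/-- A pattern: a bin may contain `p j` items of size `s j` for each `j < t`. -/
def IsPattern (k : ℕ) (s : ℕ → ℝ) (t : ℕ) (p : ℕ → ℕ) : Prop :=
  ∑ j ∈ range t, p j ≤ k ∧ ∑ j ∈ range t, p j * s j ≤ 1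

/-- Feasibility in the dual linear program: in every pattern the total weight is at most the sum of
the multipliers `y j` of the stopping times `j` at which the bin is open, stopping time `j` being
the end of batch `j`. -/
def IsDualFeasible (k : ℕ) (s : ℕ → ℝ) (t : ℕ) (w y : ℕ → ℝ) : Prop :=
  ∀ p, IsPattern k s t p →
    ∑ j ∈ range t, w j * p j ≤ ∑ j ∈ range t, if ∃ l ≤ j, p l ≠ 0 then y j else 0

variable {k t : ℕ} {s : ℕ → ℝ} {n h : ℕ → ℕ}

lemma isDualFeasible_of_forall_first {w y : ℕ → ℝ}
    (hfirst : ∀ p, IsPattern k s t p → ∀ j₀ < t, (∀ l < j₀, p l = 0) →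
      ∑ j ∈ range t, w j * p j ≤ ∑ j ∈ Ico j₀ t, y j) :
    IsDualFeasible k s t w y := by
  intro p hp
  by_cases hempty : ∀ j < t, p j = 0
  · refine le_of_eq ((sum_eq_zero fun j hj => ?_).trans (sum_eq_zero fun j hj => ?_).symm)
    · rw [hempty j (mem_range.1 hj), Nat.cast_zero, mul_zero]
    · exact if_neg fun ⟨l, hlj, hl⟩ => hl (hempty l (hlj.trans_lt (mem_range.1 hj)))
  · push Not at hempty
    have hmin {l : ℕ} (hl : l < Nat.find hempty) : p l = 0 := by
      by_contra hpl
      exact Nat.find_min hempty hl ⟨hl.trans (Nat.find_spec hempty).1, hpl⟩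
    refine (hfirst p hp _ (Nat.find_spec hempty).1 fun l => hmin).trans_eq ?_
    have hopen (j : ℕ) : (∃ l ≤ j, p l ≠ 0) ↔ Nat.find hempty ≤ j :=
      ⟨fun ⟨l, hlj, hl⟩ => (not_lt.1 fun hlt => hl (hmin hlt)).trans hlj,
        fun hle => ⟨_, hle, (Nat.find_spec hempty).2⟩⟩
    simp only [hopen, ← sum_filter]
    refine sum_congr ?_ fun _ _ => rfl
    ext j
    simp only [mem_Ico, mem_filter, mem_range, and_comm]

lemma batchStart_succ (n : ℕ → ℕ) (j : ℕ) : batchStart n (j + 1) = batchStart n j + n j :=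
  sum_range_succ n j

lemma batchStart_mono (n : ℕ → ℕ) : Monotone (batchStart n) :=
  monotone_nat_of_le_succ fun j => by simp only [batchStart_succ, Nat.le_add_right]

lemma batchIndex_batchStart_add {j x : ℕ} (hx : x < n j) :
    batchIndex n (batchStart n j + x) = j := by
  have hstarted : {l | batchStart n l ≤ batchStart n j + x} = Set.Iic j := by
    ext l
    refine ⟨fun hl => ?_, fun hl => (batchStart_mono n hl).trans (Nat.le_add_right _ _)⟩
    by_contra hlj
    have hnext := batchStart_mono n (Nat.lt_of_not_le hlj)
    simp only [Set.mem_ofPred_eq, Nat.succ_eq_add_one, batchStart_succ] at hl hnext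
    omega
  rw [batchIndex, hstarted, csSup_Iic]

lemma sum_range_batchStart {M : Type*} [AddCommMonoid M] (n : ℕ → ℕ) (t : ℕ) (F : ℕ → M) :
    ∑ i ∈ range (batchStart n t), F i =
      ∑ j ∈ range t, ∑ x ∈ range (n j), F (batchStart n j + x) := by
  induction t with
  | zero => simp [batchStart]
  | succ t ih => rw [batchStart_succ, sum_range_add, ih, sum_range_succ]

lemma sum_bin_eq_sum_binCount_nsmul {M : Type*} [AddCommMonoid M] (n h : ℕ → ℕ) (t b : ℕ)
    (F : ℕ → M) :
    ∑ i ∈ range (batchStart n t) with h i = b, F (batchIndex n i) =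
      ∑ j ∈ range t, binCount n h b j • F j := by
  rw [sum_filter, sum_range_batchStart]
  refine sum_congr rfl fun j _ => ?_
  rw [binCount, ← sum_const, sum_filter]
  refine sum_congr rfl fun x hx => ?_
  rw [batchIndex_batchStart_add (mem_range.1 hx)]

lemma isFeasible_batchInput_iff :
    IsFeasible k (batchInput s n t) (fun i => h i.1) ↔ ∀ b, IsPattern k s t (binCount n h b) := by
  refine isFeasible_seqInput_iff.trans (forall_congr' fun b => ?_)
  have hcard := sum_bin_eq_sum_binCount_nsmul n h t b fun _ => 1
  have hsize := sum_bin_eq_sum_binCount_nsmul n h t b s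
  simp only [← card_eq_sum_ones, smul_eq_mul, mul_one, nsmul_eq_mul] at hcard hsize
  simp only [IsPattern, Function.comp_apply, hcard, hsize]

lemma mem_openBins_iff {b : ℕ} : b ∈ openBins n h t ↔ ∃ l < t, binCount n h b l ≠ 0 := by
  have hcard := sum_bin_eq_sum_binCount_nsmul n h t b fun _ => 1
  simp only [← card_eq_sum_ones, smul_eq_mul, mul_one] at hcard
  rw [openBins, ← fiber_nonempty_iff_mem_image, ← card_pos, hcard, sum_pos_iff]
  simp [Nat.pos_iff_ne_zero]

lemma openBins_mono (n h : ℕ → ℕ) : Monotone (openBins n h) := fun _ _ hij =>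
  image_subset_image (range_subset_range.2 (batchStart_mono n hij))

lemma sum_binCount_openBins {j : ℕ} (hj : j < t) :
    ∑ b ∈ openBins n h t, binCount n h b j = n j := by
  have hmaps : Set.MapsTo (fun x => h (batchStart n j + x)) (range (n j)) (openBins n h t) := by
    intro x hx
    have hend := batchStart_mono n (Nat.succ_le_of_lt hj)
    rw [Nat.succ_eq_add_one, batchStart_succ] at hend
    exact mem_image_of_mem h (mem_range.2 (by have := mem_range.1 hx; omega))
  exact (card_eq_sum_card_fiberwise hmaps).symm.trans (card_range (n j))

theorem IsDualFeasible.sum_le_sum_card_openBins {w y : ℕ → ℝ} (hwy : IsDualFeasible k s t w y)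
    (hh : ∀ b, IsPattern k s t (binCount n h b)) :
    ∑ j ∈ range t, w j * n j ≤ ∑ j ∈ range t, y j * #(openBins n h (j + 1)) := by
  calc ∑ j ∈ range t, w j * n j
      = ∑ j ∈ range t, ∑ b ∈ openBins n h t, w j * binCount n h b j := by
        refine sum_congr rfl fun j hj => ?_
        rw [← mul_sum, ← Nat.cast_sum, sum_binCount_openBins (mem_range.1 hj)]
    _ = ∑ b ∈ openBins n h t, ∑ j ∈ range t, w j * binCount n h b j := sum_comm
    _ ≤ ∑ b ∈ openBins n h t, ∑ j ∈ range t, if b ∈ openBins n h (j + 1) then y j else 0 := by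
        refine sum_le_sum fun b _ => (hwy _ (hh b)).trans_eq ?_
        simp only [mem_openBins_iff, Nat.lt_succ_iff]
    _ = ∑ j ∈ range t, ∑ b ∈ openBins n h t, if b ∈ openBins n h (j + 1) then y j else 0 :=
        sum_comm
    _ = ∑ j ∈ range t, y j * #(openBins n h (j + 1)) := by
        refine sum_congr rfl fun j hj => ?_
        have hsub := openBins_mono n h (Nat.succ_le_of_lt (mem_range.1 hj))
        rw [← sum_filter, filter_mem_eq_inter, inter_eq_right.2 hsub, sum_const, nsmul_eq_mul,
          mul_comm]

theorem OPT_batchInput_le {c : ℕ → ℕ} {Q : ℕ} (hs : ∀ j, 0 ≤ s j) (hc : IsPattern k s t c)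
    (hn : ∀ j < t, n j ≤ c j * Q) : OPT k (batchInput s n t) ≤ Q := by
  -- Batch `j` is cut into blocks of `c j` consecutive items; block `b` goes into bin `b`.
  let h (i : ℕ) : ℕ := (i - batchStart n (batchIndex n i)) / c (batchIndex n i)
  have h_add {j x : ℕ} (hx : x < n j) : h (batchStart n j + x) = x / c j := by
    simp only [h, batchIndex_batchStart_add hx, Nat.add_sub_cancel_left]
  have hcount {b j : ℕ} (hj : j < t) : binCount n h b j ≤ c j := by
    calc binCount n h b j ≤ #(Ico (b * c j) (b * c j + c j)) := by
          refine card_le_card fun x hx => ?_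
          obtain ⟨hxn, hxb⟩ := mem_filter.1 hx
          have hcj : 0 < c j :=
            Nat.pos_of_mul_pos_right ((mem_range.1 hxn).pos.trans_le (hn j hj))
          rw [h_add (mem_range.1 hxn), Nat.div_eq_iff hcj] at hxb
          rw [mem_Ico]
          omega
      _ = c j := by simp
  have hfeasible : IsFeasible k (batchInput s n t) (fun i => h i.1) :=
    isFeasible_batchInput_iff.2 fun b =>
      ⟨(sum_le_sum fun j hj => hcount (mem_range.1 hj)).trans hc.1,
        (sum_le_sum fun j hj => mul_le_mul_of_nonneg_right
          (Nat.cast_le.2 (hcount (mem_range.1 hj))) (hs j)).trans hc.2⟩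
  have hbins : openBins n h t ⊆ range Q := by
    intro b hb
    obtain ⟨j, hj, hbj⟩ := mem_openBins_iff.1 hb
    obtain ⟨x, hx⟩ := card_ne_zero.1 hbj
    obtain ⟨hxn, rfl⟩ := mem_filter.1 hx
    rw [h_add (mem_range.1 hxn), mem_range]
    exact Nat.div_lt_of_lt_mul ((mem_range.1 hxn).trans_le (hn j hj))
  calc OPT k (batchInput s n t) ≤ #(openBins n h t) :=
        (OPT_le_binsUsed hfeasible).trans_eq (binsUsed_seqInput _ h)
    _ ≤ Q := (card_le_card hbins).trans_eq (card_range Q)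

lemma validInput_batchInput (hs : ∀ j, 0 < s j ∧ s j ≤ 1) (n : ℕ → ℕ) (t : ℕ) :
    ValidInput (batchInput s n t) :=
  validInput_seqInput (fun _ => hs _) _

lemma onlineBins_batchInput (A : List ℝ → ℕ) (s : ℕ → ℝ) (n : ℕ → ℕ) (t : ℕ) :
    onlineBins A (batchInput s n t) = #(openBins n (onlineBin A (s ∘ batchIndex n)) t) := by
  rw [onlineBins, batchInput, onlinePacking_seqInput, binsUsed_seqInput, openBins]

theorem exists_mul_OPT_le_onlineBins {A : List ℝ → ℕ} {w y : ℕ → ℝ} {R : ℝ}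
    (hA : OnlineValid k A) (hs : ∀ j, 0 < s j ∧ s j ≤ 1) (ht : t ≠ 0) (hy : ∀ m < t, 0 < y m)
    (hwy : IsDualFeasible k s t w y)
    (hR : R * ∑ m ∈ range t, y m * OPT k (batchInput s n (m + 1)) ≤ ∑ j ∈ range t, w j * n j) :
    ∃ m < t, R * OPT k (batchInput s n (m + 1)) ≤ onlineBins A (batchInput s n (m + 1)) := by
  have hfeasible := hA _ (validInput_batchInput hs n t)
  rw [batchInput, onlinePacking_seqInput] at hfeasible
  have hduality := hwy.sum_le_sum_card_openBins (isFeasible_batchInput_iff.1 hfeasible)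
  simp only [← onlineBins_batchInput] at hduality
  rw [mul_sum] at hR
  obtain ⟨m, hm, hle⟩ := exists_le_of_sum_le (nonempty_range_iff.2 ht) (hR.trans hduality)
  rw [mul_left_comm] at hle
  exact ⟨m, mem_range.1 hm, le_of_mul_le_mul_left hle (hy m (mem_range.1 hm))⟩

end Batches

section Adversary

/-! ### The four-batch adversary -/

/-- The item sizes of the four batches: slightly more than `0`, `1/7`, `1/3` and `1/2`. -/
def advSize (k : ℕ) : ℕ → ℝ
  | 0 => 1 / (200 * k)
  | 1 => 30 / 200
  | 2 => 68 / 200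
  | _ + 3 => 101 / 200

/-- The numbers of items of the four batches, for the scale parameter `N`. -/
def advCount (k N : ℕ) : ℕ → ℕ
  | 0 => (k - 6) * (k * N)
  | _ => 6 * (k * N)

/-- The number of bins that suffice for the adversarial batches `0, …, m`. -/
def advBins (k N : ℕ) : ℕ → ℕ
  | 0 => (k - 6) * N
  | 1 => k * N
  | 2 => 3 * (k * N)
  | _ => 6 * (k * N)

/-- The pattern by which `advBins k N m` bins accommodate the adversarial batches `0, …, m`:
its second argument is the batch. -/
def advPattern (k : ℕ) : ℕ → ℕ → ℕ
  | 0, _ => k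
  | 1, 0 => k - 6
  | 1, _ => 6
  | 2, 0 => k - 4
  | 2, _ => 2
  | _, 0 => k - 3
  | _, _ => 1

/-- The dual weights of the items of the four batches. -/
def advWeight : ℕ → ℝ
  | 0 | 1 => 1
  | _ => 2

/-- The dual multipliers of the four stopping times. -/
def advMultiplier (k : ℕ) : ℕ → ℝ
  | 0 => k - 4
  | _ => 2

variable {k : ℕ}

lemma advSize_pos_le_one (hk : 0 < k) (j : ℕ) : 0 < advSize k j ∧ advSize k j ≤ 1 := by
  have hk' : (1 : ℝ) ≤ k := Nat.one_le_cast.2 hk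
  unfold advSize
  split
  · exact ⟨by positivity, div_le_one_of_le₀ (by linarith) (by positivity)⟩
  all_goals norm_num

lemma mul_advSize_zero_le {c : ℕ} (hc : c ≤ k) : c * advSize k 0 ≤ 1 / 200 := by
  rw [advSize, mul_one_div]
  refine div_le_of_le_mul₀ (by positivity) (by norm_num) ?_
  have hc' : (c : ℝ) ≤ k := Nat.cast_le.2 hc
  linarith

lemma isPattern_advPattern (hk : 6 ≤ k) {m : ℕ} (hm : m < 4) :
    IsPattern k (advSize k) (m + 1) (advPattern k m) := by
  have hsmall : advPattern k m 0 * advSize k 0 ≤ 1 / 200 :=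
    mul_advSize_zero_le (by unfold advPattern; split <;> omega)
  interval_cases m <;>
    simp only [IsPattern, sum_range_succ, sum_range_zero, advPattern] at hsmall ⊢ <;>
    refine ⟨by omega, ?_⟩ <;>
    norm_num only [advSize] at hsmall ⊢ <;>
    linarith

lemma advCount_le_advPattern_mul_advBins (k N : ℕ) {j m : ℕ} (hm : m < 4) (hj : j ≤ m) :
    advCount k N j ≤ advPattern k m j * advBins k N m := by
  interval_cases m <;> interval_cases j <;> simp only [advCount, advPattern, advBins]
  · exact (Nat.mul_left_comm _ _ _).le
  all_goals first | omega | exact Nat.mul_le_mul (by omega) (by omega)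

lemma IsPattern.adv_large_le {p : ℕ → ℕ} (hp : IsPattern k (advSize k) 4 p) :
    30 * p 1 + 68 * p 2 + 101 * p 3 ≤ 200 := by
  have hsmall : 0 ≤ p 0 * advSize k 0 := by unfold advSize; positivity
  have hsize := hp.2
  simp only [sum_range_succ, sum_range_zero, advSize] at hsmall hsize
  have hlarge : (30 * p 1 + 68 * p 2 + 101 * p 3 : ℝ) ≤ 200 := by linarith
  exact_mod_cast hlarge

lemma isDualFeasible_adv (k : ℕ) :
    IsDualFeasible k (advSize k) 4 advWeight (advMultiplier k) := by
  refine isDualFeasible_of_forall_first fun p hp j₀ hj₀ hzero => ?_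
  have hcard := hp.1
  have hlarge := hp.adv_large_le
  simp only [sum_range_succ, sum_range_zero, zero_add] at hcard
  have hweight {c : ℕ} (hc : p 0 + p 1 + 2 * p 2 + 2 * p 3 ≤ c) :
      (p 0 + p 1 + 2 * p 2 + 2 * p 3 : ℝ) ≤ c := by exact_mod_cast hc
  -- At most two items exceed `1 / 3`, six exceed `1 / 7` and one exceeds `1 / 2`; these limits are
  -- what makes the four multiplier totals `k + 2`, `6`, `4`, `2` large enough.
  interval_cases j₀ <;> simp only [sum_range_succ, sum_range_zero, sum_Ico_succ_top, Ico_self,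
    sum_empty, advWeight, advMultiplier, Nat.reduceLeDiff, zero_add, one_mul]
  · have hle := hweight (c := k + 2) (by omega)
    push_cast at hle
    linarith
  · have hle := hweight (c := 6) (by have := hzero 0; omega)
    norm_num only at hle ⊢
    exact hle
  · have hle := hweight (c := 4) (by have := hzero 0; have := hzero 1; omega)
    norm_num only at hle ⊢
    exact hle
  · exact hweight (c := 2) (by have := hzero 0; have := hzero 1; have := hzero 2; omega)

lemma advMultiplier_pos (hk : 4 < k) (m : ℕ) : 0 < advMultiplier k m := by
  have hk' : (4 : ℝ) < k := Nat.ofNat_lt_cast.2 hk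
  unfold advMultiplier
  split <;> linarith

lemma OPT_adv_le (hk : 6 ≤ k) (N : ℕ) {m : ℕ} (hm : m < 4) :
    OPT k (batchInput (advSize k) (advCount k N) (m + 1)) ≤ advBins k N m :=
  OPT_batchInput_le (fun j => (advSize_pos_le_one (by omega) j).1.le) (isPattern_advPattern hk hm)
    fun _ hj => advCount_le_advPattern_mul_advBins k N hm (Nat.le_of_lt_succ hj)

lemma mul_le_length_batchInput_adv (hk : 7 ≤ k) (N m : ℕ) :
    k * N ≤ (batchInput (advSize k) (advCount k N) (m + 1)).length := by
  calc k * N ≤ advCount k N 0 := Nat.le_mul_of_pos_left _ (by omega)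
    _ = batchStart (advCount k N) 1 := by simp [batchStart]
    _ ≤ batchStart (advCount k N) (m + 1) := batchStart_mono _ (by omega)
    _ = _ := (length_seqInput _).symm

lemma sum_advMultiplier_mul_advBins (hk : 6 ≤ k) (N : ℕ) :
    ∑ m ∈ range 4, advMultiplier k m * advBins k N m = ((k : ℝ) ^ 2 + 10 * k + 24) * N := by
  simp only [sum_range_succ, sum_range_zero, advMultiplier, advBins]
  push_cast [Nat.cast_sub hk]
  ring

lemma sum_advWeight_mul_advCount (hk : 6 ≤ k) (N : ℕ) :
    ∑ j ∈ range 4, advWeight j * advCount k N j = ((k : ℝ) ^ 2 + 24 * k) * N := by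
  simp only [sum_range_succ, sum_range_zero, advWeight, advCount]
  push_cast [Nat.cast_sub hk]
  ring

lemma ratio_mul_sum_OPT_le (hk : 6 ≤ k) (N : ℕ) :
    ((k : ℝ) ^ 2 + 24 * k) / ((k : ℝ) ^ 2 + 10 * k + 24) *
        ∑ m ∈ range 4, advMultiplier k m * OPT k (batchInput (advSize k) (advCount k N) (m + 1)) ≤
      ∑ j ∈ range 4, advWeight j * advCount k N j := by
  calc
    _ ≤ ((k : ℝ) ^ 2 + 24 * k) / ((k : ℝ) ^ 2 + 10 * k + 24) *
        ∑ m ∈ range 4, advMultiplier k m * advBins k N m := by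
      gcongr with m hm
      · exact (advMultiplier_pos (by omega) m).le
      · exact OPT_adv_le hk N (mem_range.1 hm)
    _ = _ := by
      rw [sum_advMultiplier_mul_advBins hk, sum_advWeight_mul_advCount hk, ← mul_assoc,
        div_mul_cancel₀ _ (by positivity)]

end Adversary

theorem online_asymp_lb_k78_general (k : ℕ) (hk : 7 ≤ k) (A : List ℝ → ℕ) (hA : OnlineValid k A)
    (N : ℕ) : ∃ L : List ℝ, ValidInput L ∧ N ≤ OPT k L ∧
      ((k : ℝ) ^ 2 + 24 * k) / ((k : ℝ) ^ 2 + 10 * k + 24) * (OPT k L : ℝ)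
        ≤ (onlineBins A L : ℝ) := by
  have hsize := advSize_pos_le_one (k := k) (by omega)
  obtain ⟨m, -, hle⟩ := exists_mul_OPT_le_onlineBins hA hsize four_ne_zero
    (fun m _ => advMultiplier_pos (by omega) m) (isDualFeasible_adv k)
    (ratio_mul_sum_OPT_le (by omega) N)
  have hvalid := validInput_batchInput hsize (advCount k N) (m + 1)
  have hlength : k * N ≤ k * OPT k (batchInput (advSize k) (advCount k N) (m + 1)) :=
    (mul_le_length_batchInput_adv hk N m).trans (length_le_mul_OPT_s3 (hA _ hvalid))
  exact ⟨_, hvalid, Nat.le_of_mul_le_mul_left hlength (by omega), hle⟩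

/-- For k ∈ {7, 8}, the asymptotic competitive ratio of every
deterministic online algorithm is at least (k² + 24k)/(k² + 10k + 24). -/
theorem online_asymp_lb_k78 (k : ℕ) (hk : k = 7 ∨ k = 8)
    (A : List ℝ → ℕ) (hA : OnlineValid k A) :
    ∀ ε : ℝ, 0 < ε → ∀ N : ℕ, ∃ L : List ℝ, ValidInput L ∧ N ≤ OPT k L ∧
      (((k : ℝ) ^ 2 + 24 * k) / ((k : ℝ) ^ 2 + 10 * k + 24) - ε) * (OPT k L : ℝ)
        ≤ (onlineBins A L : ℝ) := by
  intro ε hε N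
  obtain ⟨L, hL, hN, hle⟩ := online_asymp_lb_k78_general k (by omega) A hA N
  exact ⟨L, hL, hN, le_trans (by gcongr; linarith) hle⟩
end
end

section
/- Let k ≥ 2, let L be an input list, and let P be any feasible packing of L (in particular, an optimal packing). Then every bin of P contains at most one item that First Fit packs into a 1-bin (a bin of FF's final packing containing exactly one item). -/
/-!
The content of a First Fit bin at any time is the sum of the contributions `(1, size)` of its items
so far. Hence the bin of an item `i` that stays alone keeps the content `(1, L.get i)` from the
arrival of `i` on. If a later item `j` fits together with `i`, then, as `2 ≤ k`, this bin can
receive `j`, so First Fit packs `j` into one of the bins opened so far. Each of those already holds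
an item, so `j` is not alone. Thus any two items in 1-bins have total size more than `1`.
-/

open scoped Classical
noncomputable section

section FirstFit

variable {k : ℕ} {L : List ℝ}

-- For `m ≥ bs.length` the default `0` is an empty bin, and a new bin has index at most `m`.
lemma ffFind_le {x : ℝ} {bs : List (ℕ × ℝ)} {m : ℕ} (hcard : (bs.getD m 0).1 < k)
    (hsize : (bs.getD m 0).2 + x ≤ 1) : ffFind k x bs ≤ m := by
  induction bs generalizing m with
  | nil => exact Nat.zero_le m
  | cons b bs ih =>
    rw [ffFind]
    split_ifs with hb
    · exact Nat.zero_le m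
    · cases m with
      | zero => exact absurd ⟨hcard, hsize⟩ hb
      | succ m => exact Nat.succ_le_succ (ih hcard hsize)

lemma getD_ffUpdate (k : ℕ) (x : ℝ) (bs : List (ℕ × ℝ)) (m : ℕ) :
    (ffUpdate k x bs).getD m 0 = bs.getD m 0 + if ffFind k x bs = m then (1, x) else 0 := by
  induction bs generalizing m with
  | nil => cases m <;> simp [ffFind, ffUpdate]
  | cons b bs ih =>
    rw [ffFind, ffUpdate]
    split_ifs with hb <;> cases m <;> simp_all [Prod.ext_iff]

lemma fst_pos_of_mem_ffUpdate {x : ℝ} {bs : List (ℕ × ℝ)} (hbs : ∀ b ∈ bs, 0 < b.1) :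
    ∀ b ∈ ffUpdate k x bs, 0 < b.1 := by
  induction bs with
  | nil => simp [ffUpdate]
  | cons b bs ih =>
    rw [ffUpdate]
    obtain ⟨hb, hbs⟩ := List.forall_mem_cons.mp hbs
    split_ifs
    · exact List.forall_mem_cons.mpr ⟨Nat.succ_pos _, hbs⟩
    · exact List.forall_mem_cons.mpr ⟨hb, ih hbs⟩

lemma ffState_concat (k : ℕ) (L : List ℝ) (x : ℝ) :
    ffState k (L ++ [x]) = ffUpdate k x (ffState k L) :=
  List.foldl_concat ..

lemma fst_pos_of_mem_ffState : ∀ b ∈ ffState k L, 0 < b.1 := by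
  induction L using List.reverseRecOn with
  | nil => simp [ffState]
  | append_singleton L x ih =>
    rw [ffState_concat]
    exact fst_pos_of_mem_ffUpdate ih

lemma getD_ffState_ne_zero_iff {m : ℕ} :
    (ffState k L).getD m 0 ≠ 0 ↔ m < (ffState k L).length := by
  refine ⟨fun h => ?_, fun h h0 => ?_⟩
  · contrapose! h
    exact List.getD_eq_default _ _ h
  · have hpos := fst_pos_of_mem_ffState _ (List.getElem_mem h)
    rw [← List.getD_eq_getElem _ 0 h, h0] at hpos
    exact lt_irrefl 0 hpos

lemma getD_ffState_take (k : ℕ) (L : List ℝ) (m : ℕ) {t : ℕ} (ht : t ≤ L.length) :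
    (ffState k (L.take t)).getD m 0 =
      ∑ i : Fin L.length with i.1 < t ∧ ffAssign k L i = m, (1, L.get i) := by
  induction t with
  | zero => simp [ffState]
  | succ t ih =>
    have hfilter : ({i | i.1 < t + 1} : Finset (Fin L.length)) =
        insert ⟨t, ht⟩ ({i | i.1 < t} : Finset (Fin L.length)) := by
      ext i
      simp [Fin.ext_iff, Nat.le_iff_lt_or_eq, or_comm]
    rw [List.take_succ_eq_append_getElem ht, ffState_concat, getD_ffUpdate,
      ih (Nat.le_of_succ_le ht), ← Finset.filter_filter, ← Finset.filter_filter, hfilter,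
      Finset.sum_filter (fun i => ffAssign k L i = m),
      Finset.sum_filter (fun i => ffAssign k L i = m), Finset.sum_insert (by simp), add_comm]
    rfl

/-- Item `i` is packed by First Fit into a 1-bin, that is, a bin whose only item is `i`. -/
abbrev InOneBin (k : ℕ) (L : List ℝ) (i : Fin L.length) : Prop :=
  (Finset.univ.filter (fun j : Fin L.length => ffAssign k L j = ffAssign k L i)).card = 1

namespace InOneBin

variable {i j : Fin L.length}

lemma ffAssign_eq_iff (hi : InOneBin k L i) : ffAssign k L j = ffAssign k L i ↔ j = i :=
  ⟨fun h => Finset.card_le_one.mp hi.le j (by simpa using h) i (by simp), congrArg _⟩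

lemma getD_ffState_take_ffAssign (hi : InOneBin k L i) (j : Fin L.length) :
    (ffState k (L.take j)).getD (ffAssign k L i) 0 = if i < j then (1, L.get i) else 0 := by
  have hitems : ({l | l < j ∧ ffAssign k L l = ffAssign k L i} : Finset (Fin L.length)) =
      if i < j then {i} else ∅ := by
    ext l
    simp only [hi.ffAssign_eq_iff, Finset.mem_filter_univ]
    grind
  rw [getD_ffState_take k L _ j.2.le]
  simp only [Fin.val_fin_lt, hitems]
  split_ifs <;> simp

lemma one_lt_add_of_lt (hk : 2 ≤ k) (hi : InOneBin k L i) (hj : InOneBin k L j) (hij : i < j) :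
    1 < L.get i + L.get j := by
  by_contra! hfit
  have hcontent : (ffState k (L.take j)).getD (ffAssign k L i) 0 = (1, L.get i) := by
    rw [hi.getD_ffState_take_ffAssign, if_pos hij]
  have hopen : ffAssign k L i < (ffState k (L.take j)).length :=
    getD_ffState_ne_zero_iff.mp (by rw [hcontent]; simp)
  have hle : ffAssign k L j ≤ ffAssign k L i :=
    ffFind_le (by rw [hcontent]; exact hk) (by rw [hcontent]; exact hfit)
  apply getD_ffState_ne_zero_iff.mpr (hle.trans_lt hopen)
  rw [hj.getD_ffState_take_ffAssign, if_neg (lt_irrefl j)]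

lemma one_lt_add (hk : 2 ≤ k) (hi : InOneBin k L i) (hj : InOneBin k L j) (hij : i ≠ j) :
    1 < L.get i + L.get j := by
  rcases hij.lt_or_gt with hlt | hgt
  · exact one_lt_add_of_lt hk hi hj hlt
  · rw [add_comm]
    exact one_lt_add_of_lt hk hj hi hgt

end InOneBin

end FirstFit

theorem ff_one_bins_general {k : ℕ} (hk : 2 ≤ k) {L : List ℝ} (hL : ∀ x ∈ L, 0 ≤ x)
    {S : Finset (Fin L.length)} (hS : ∑ i ∈ S, L.get i ≤ 1) :
    (S.filter (InOneBin k L)).card ≤ 1 := by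
  rw [Finset.card_le_one]
  intro i hi j hj
  obtain ⟨hiS, hi⟩ := Finset.mem_filter.mp hi
  obtain ⟨hjS, hj⟩ := Finset.mem_filter.mp hj
  by_contra hij
  have hfit : L.get i + L.get j ≤ ∑ l ∈ S, L.get l :=
    Finset.add_le_sum (fun l _ => hL _ (L.get_mem l)) hiS hjS hij
  exact (hi.one_lt_add hk hj hij).not_ge (hfit.trans hS)

/-- Every bin of any feasible packing `f` of `L` contains at most one
item that First Fit packs into a 1-bin (a bin of FF's final packing with exactly
one item). -/
theorem ff_one_bins (k : ℕ) (hk : 2 ≤ k) (L : List ℝ) (hL : ValidInput L)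
    (f : Fin L.length → ℕ) (hf : IsFeasible k L f) (b : ℕ) :
    (Finset.univ.filter (fun i : Fin L.length => f i = b ∧
        (Finset.univ.filter
          (fun j : Fin L.length => ffAssign k L j = ffAssign k L i)).card = 1)).card
      ≤ 1 := by
  rw [← Finset.filter_filter]
  exact ff_one_bins_general hk (fun x hx => (hL x hx).1.le) (hf b).2
end
end

section
/- Let k ≥ 2, let L be an input list, and let 1 ≤ j ≤ k−1. In First Fit's final packing of L, every j-bin except for at most one has level strictly greater than j/(j+1); moreover, every j⁺-bin except for at most one has level strictly greater than j/(j+1). -/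
/-!
Every item of a bin `q` opened after a bin `p` was refused by `p` on arrival. If `p` ends with fewer
than `k` items, each refusal was for lack of space, so the item is larger than the free space of `p`
at that time, hence larger than the final free space of `p`. A bin `q` with `m` items therefore has
level greater than `m * (1 - level p)`. If moreover `p` has level at most `j / (j + 1)`, its free
space is at least `1 / (j + 1)`, so a later bin with at least `j` items has level greater than
`j / (j + 1)`, and two exceptional bins cannot coexist.
-/

open scoped Classical
noncomputable section

lemma card_filter_getD_le_one_of_pairwise {α : Type*} {l : List α} {d : α} {P : α → Prop}
    [DecidablePred fun b => P (l.getD b d)] (h : l.Pairwise fun p q => P p → ¬P q) :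
    ((Finset.range l.length).filter fun b => P (l.getD b d)).card ≤ 1 := by
  have not_later {a b : ℕ} (hb : b < l.length) (hPa : P (l.getD a d)) (hPb : P (l.getD b d)) :
      ¬a < b := fun hab => by
    have ha := hab.trans hb
    rw [List.getD_eq_getElem _ _ ha] at hPa
    rw [List.getD_eq_getElem _ _ hb] at hPb
    exact List.pairwise_iff_getElem.1 h a b ha hb hab hPa hPb
  refine Finset.card_le_one.2 fun a ha b hb => ?_
  simp only [Finset.mem_filter, Finset.mem_range] at ha hb
  exact le_antisymm (not_lt.1 (not_later ha.1 hb.2 ha.2)) (not_lt.1 (not_later hb.1 ha.2 hb.2))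

/-- The relation that First Fit maintains between a bin `p` and a bin `q` opened after it: unless
`p` is full in cardinality, the items of `q` are on average larger than the free space of `p`.
Bins are pairs (number of items, level), as in `ffState`. -/
def Dominates (k : ℕ) (p q : ℕ × ℝ) : Prop :=
  p.1 < k → (q.1 : ℝ) * (1 - p.2) < q.2

namespace Dominates

variable {k j : ℕ} {x : ℝ} {p q : ℕ × ℝ}

lemma singleton_of_refused (hp : ¬(p.1 < k ∧ p.2 + x ≤ 1)) : Dominates k p (1, x) := by
  intro hpk
  have hx : 1 < p.2 + x := not_le.1 fun hfit => hp ⟨hpk, hfit⟩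
  push_cast
  linarith

lemma add_item_right_of_refused (h : Dominates k p q) (hp : ¬(p.1 < k ∧ p.2 + x ≤ 1)) :
    Dominates k p (q.1 + 1, q.2 + x) := by
  intro hpk
  calc ((q.1 + 1 : ℕ) : ℝ) * (1 - p.2)
      = q.1 * (1 - p.2) + (1 : ℕ) * (1 - p.2) := by push_cast; ring
    _ < q.2 + x := add_lt_add (h hpk) (singleton_of_refused hp hpk)

lemma add_item_left (h : Dominates k p q) (hx : 0 ≤ x) : Dominates k (p.1 + 1, p.2 + x) q := by
  intro hpk
  calc (q.1 : ℝ) * (1 - (p.2 + x))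
      ≤ q.1 * (1 - p.2) := by gcongr; linarith
    _ < q.2 := h (Nat.lt_of_succ_lt hpk)

lemma div_add_one_lt_level (h : Dominates k p q) (hpk : p.1 < k)
    (hp : p.2 ≤ (j : ℝ) / (j + 1)) (hq : j ≤ q.1) : (j : ℝ) / (j + 1) < q.2 := by
  have free_space : 1 / ((j : ℝ) + 1) ≤ 1 - p.2 := by
    have : (j : ℝ) / (j + 1) + 1 / (j + 1) = 1 := by field_simp
    linarith
  calc (j : ℝ) / (j + 1) = j * (1 / (j + 1)) := by ring
    _ ≤ q.1 * (1 - p.2) := by gcongr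
    _ < q.2 := h hpk

end Dominates

lemma forall_mem_ffUpdate {k : ℕ} {x : ℝ} {P : ℕ × ℝ → Prop} (hnew : P (1, x))
    (hadd : ∀ b, P b → P (b.1 + 1, b.2 + x)) {bs : List (ℕ × ℝ)} (h : ∀ b ∈ bs, P b) :
    ∀ b ∈ ffUpdate k x bs, P b := by
  induction bs with
  | nil => simpa [ffUpdate] using hnew
  | cons b bs ih =>
    rw [List.forall_mem_cons] at h
    rw [ffUpdate]
    split_ifs
    · exact List.forall_mem_cons.2 ⟨hadd b h.1, h.2⟩
    · exact List.forall_mem_cons.2 ⟨h.1, ih h.2⟩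

lemma pairwise_dominates_ffUpdate {k : ℕ} {x : ℝ} (hx : 0 ≤ x) {bs : List (ℕ × ℝ)}
    (h : bs.Pairwise (Dominates k)) : (ffUpdate k x bs).Pairwise (Dominates k) := by
  induction bs with
  | nil => exact List.pairwise_singleton _ _
  | cons b bs ih =>
    rw [List.pairwise_cons] at h
    rw [ffUpdate]
    split_ifs with hb
    · exact List.pairwise_cons.2 ⟨fun q hq => (h.1 q hq).add_item_left hx, h.2⟩
    · exact List.pairwise_cons.2 ⟨forall_mem_ffUpdate (.singleton_of_refused hb)
        (fun _ hq => hq.add_item_right_of_refused hb) h.1, ih h.2⟩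

lemma pairwise_dominates_ffState (k : ℕ) {L : List ℝ} (hL : ∀ x ∈ L, 0 ≤ x) :
    (ffState k L).Pairwise (Dominates k) :=
  List.foldlRecOn L _ List.Pairwise.nil fun _ ih x hx => pairwise_dominates_ffUpdate (hL x hx) ih

/-- For 1 ≤ j ≤ k − 1, in First Fit's final packing of `L` every j-bin
except at most one has level strictly greater than j/(j+1), and every j⁺-bin
(at least j and at most k−1 items) except at most one has level strictly greater
than j/(j+1). -/
theorem ff_level_bound (k : ℕ) (hk : 2 ≤ k) (L : List ℝ) (hL : ValidInput L)
    (j : ℕ) (hj1 : 1 ≤ j) (hj2 : j ≤ k - 1) :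
    ((Finset.range (ffState k L).length).filter (fun b =>
        ((ffState k L).getD b (0, 0)).1 = j ∧
        ((ffState k L).getD b (0, 0)).2 ≤ (j : ℝ) / (j + 1))).card ≤ 1 ∧
    ((Finset.range (ffState k L).length).filter (fun b =>
        j ≤ ((ffState k L).getD b (0, 0)).1 ∧ ((ffState k L).getD b (0, 0)).1 ≤ k - 1 ∧
        ((ffState k L).getD b (0, 0)).2 ≤ (j : ℝ) / (j + 1))).card ≤ 1 := by
  have not_both_low : (ffState k L).Pairwise fun p q =>
      (j ≤ p.1 ∧ p.1 ≤ k - 1 ∧ p.2 ≤ (j : ℝ) / (j + 1)) →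
        ¬(j ≤ q.1 ∧ q.1 ≤ k - 1 ∧ q.2 ≤ (j : ℝ) / (j + 1)) := by
    refine (pairwise_dominates_ffState k fun x hx => (hL x hx).1.le).imp ?_
    rintro p q hpq ⟨-, hpk, hp⟩ ⟨hjq, -, hq⟩
    exact hq.not_gt (hpq.div_add_one_lt_level (by lia) hp hjq)
  have jplus_bins := card_filter_getD_le_one_of_pairwise (d := (0, 0)) not_both_low
  refine ⟨(Finset.card_le_card ?_).trans jplus_bins, jplus_bins⟩
  refine Finset.monotone_filter_right _ fun b _ ⟨hj, hlevel⟩ => ?_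
  exact ⟨hj.ge, hj.trans_le hj2, hlevel⟩
end
end
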